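/- arXiv:1301.4463 — 4 statements merged into one kernel-verified Lean document; each statement's English description precedes it below -/
import Mathlib

section
/- Let X be a real-valued Lévy process on a filtered probability space satisfying the usual conditions, with Q^x(B) := P({X(T_x) ∈ B} ∩ {T_x < ∞}) for Borel B ⊆ ℝ and 𝒜 := {x ∈ ℝ : Q^x is carried by a singleton}. Suppose x > 0 satisfies P(T_x < ∞) > 0 and Q^x = P(T_x < ∞)·δ_{f(x)} for a (necessarily unique) f(x), which then satisfies f(x) ≥ x. Then ∪_{n∈ℕ₀} [x + n·f(x), (n+1)·f(x)] ⊆ 𝒜. -/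
open MeasureTheory ProbabilityTheory Filter Set
open scoped ENNReal Topology

/-- Left limit of a path at time `t`, with the convention `f(0-) := f(0)`
(and junk `f t` for `t < 0`). -/
noncomputable def leftLimAt (f : ℝ → ℝ) (t : ℝ) : ℝ :=
  if 0 < t then Function.leftLim f t else f t

/-- A path `f : [0,∞) → ℝ` is càdlàg: right-continuous on `[0,∞)`,
with left limits on `(0,∞)`. -/
def IsCadlag (f : ℝ → ℝ) : Prop :=
  (∀ t : ℝ, 0 ≤ t → ContinuousWithinAt f (Set.Ici t) t) ∧
  (∀ t : ℝ, 0 < t → ∃ l : ℝ, Filter.Tendsto f (nhdsWithin t (Set.Iio t)) (nhds l))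

/-- `X` is a Lévy process w.r.t. the filtration `F` under `P`, on a filtered
probability space satisfying the usual conditions. -/
structure IsLevy {Ω : Type*} {m0 : MeasurableSpace Ω} (P : Measure Ω)
    (F : MeasureTheory.Filtration ℝ m0) (X : ℝ → Ω → ℝ) : Prop where
  isProb : IsProbabilityMeasure P
  complete : P.IsComplete
  rightCont : ∀ t : ℝ, F t = ⨅ s : Set.Ioi t, F (s : ℝ)
  nullF0 : ∀ N : Set Ω, P N = 0 → MeasurableSet[F 0] N
  adapted : ∀ t : ℝ, Measurable[F t] (X t)
  start : P {ω | X 0 ω = 0} = 1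
  cadlag : ∀ᵐ ω ∂P, IsCadlag (fun t => X t ω)
  indep : ∀ s t : ℝ, 0 ≤ s → s ≤ t →
    ProbabilityTheory.Indep
      (MeasurableSpace.comap (fun ω => X t ω - X s ω) inferInstance) (F s) P
  statInc : ∀ s t : ℝ, 0 ≤ s → s ≤ t →
    Measure.map (fun ω => X t ω - X s ω) P = Measure.map (X (t - s)) P

/-- First passage time `T_x = inf{t ≥ 0 : X_t ≥ x}` (valued in `[0,∞]`, `inf ∅ = ∞`). -/
noncomputable def hitT {Ω : Type*} (X : ℝ → Ω → ℝ) (x : ℝ) (ω : Ω) : ℝ≥0∞ :=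
  sInf ((fun t : ℝ => ENNReal.ofReal t) '' {t : ℝ | 0 ≤ t ∧ x ≤ X t ω})

/-- First passage time `T̂_x = inf{t ≥ 0 : X_t > x}`. -/
noncomputable def hitThat {Ω : Type*} (X : ℝ → Ω → ℝ) (x : ℝ) (ω : Ω) : ℝ≥0∞ :=
  sInf ((fun t : ℝ => ENNReal.ofReal t) '' {t : ℝ | 0 ≤ t ∧ x < X t ω})

/-- `X(T_x)`, the position at the first passage time (junk if `T_x = ∞`). -/
noncomputable def stopVal {Ω : Type*} (X : ℝ → Ω → ℝ) (x : ℝ) (ω : Ω) : ℝ :=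
  X (hitT X x ω).toReal ω

/-- `X(T̂_x)`. -/
noncomputable def stopValHat {Ω : Type*} (X : ℝ → Ω → ℝ) (x : ℝ) (ω : Ω) : ℝ :=
  X (hitThat X x ω).toReal ω

/-- `Q^x(B) = P({X(T_x) ∈ B} ∩ {T_x < ∞})`. -/
noncomputable def Qfun {Ω : Type*} {m0 : MeasurableSpace Ω} (P : Measure Ω)
    (X : ℝ → Ω → ℝ) (x : ℝ) (B : Set ℝ) : ℝ≥0∞ :=
  P ({ω | stopVal X x ω ∈ B} ∩ {ω | hitT X x ω < ⊤})

/-- Running supremum `X̄_t = sup{X_s : s ∈ [0,t]}`. -/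
noncomputable def runSup {Ω : Type*} (X : ℝ → Ω → ℝ) (t : ℝ) (ω : Ω) : ℝ :=
  sSup ((fun s => X s ω) '' Set.Icc 0 t)

/-!
The first passage time `T_y` is almost surely the increasing limit of the strict passage times of
the levels below `y`: at that limit the path has already reached `y`, because a Lévy process
is continuous along increasing sequences of stopping times. Hence `T_y` is itself a stopping time,
and the event of passing `y` at a prescribed position can be read off the path at rational
times.

If the passage over `a` lands exactly at `a`, the strong Markov property at `T_a` makes the passage
over `a + z` a copy of the passage over `z`, shifted by `a`. If the passage over `x` lands at `f`,
then so does the passage over every level in `[x, f]`. In particular `f` is reached exactly, hence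
by induction so is every multiple `n * f`, and restarting there carries `[x, f]` to
`[x + n * f, (n + 1) * f]`.
-/

/-! ### Right-continuous paths and their passage times -/

/-- Right-continuity of a path on the time axis `[0, ∞)`. -/
def RightContinuousPath (g : ℝ → ℝ) : Prop :=
  ∀ t : ℝ, 0 ≤ t → ContinuousWithinAt g (Ici t) t

namespace RightContinuousPath

variable {g : ℝ → ℝ} {s t t' y τ : ℝ}

lemma comp_const_add_sub_const (hg : RightContinuousPath g) (hs : 0 ≤ s) (c : ℝ) :
    RightContinuousPath fun u => g (s + u) - c := by
  intro t ht
  have hmaps : MapsTo (fun u => s + u) (Ici t) (Ici (s + t)) := fun u hu =>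
    add_le_add_right (mem_Ici.1 hu) s
  exact ((hg (s + t) (add_nonneg hs ht)).comp (by fun_prop) hmaps).sub continuousWithinAt_const

lemma exists_nnrat_mem_Ioo (hg : RightContinuousPath g) (ht : 0 ≤ t) (htt' : t < t')
    {U : Set ℝ} (hU : U ∈ 𝓝 (g t)) : ∃ q : ℚ≥0, (q : ℝ) ∈ Ioo t t' ∧ g q ∈ U := by
  obtain ⟨b, hb, hsub⟩ := (mem_nhdsGE_iff_exists_Ico_subset' htt').1 (hg t ht hU)
  obtain ⟨q, htq, hqb⟩ := exists_rat_btwn (lt_min (mem_Ioi.1 hb) htt')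
  lift q to ℚ≥0 using by exact_mod_cast ht.trans htq.le
  rw [lt_min_iff] at hqb
  exact ⟨q, ⟨htq, hqb.2⟩, hsub ⟨htq.le, hqb.1⟩⟩

lemma le_apply_of_forall_exists_mem_Ico (hg : RightContinuousPath g) (hτ : 0 ≤ τ)
    (h : ∀ t' > τ, ∃ t ∈ Ico τ t', y ≤ g t) : y ≤ g τ := by
  by_contra! hlt
  obtain ⟨b, hb, hsub⟩ :=
    (mem_nhdsGE_iff_exists_Ico_subset' (lt_add_one τ)).1 (hg τ hτ (Iio_mem_nhds hlt))
  obtain ⟨t, ht, hyt⟩ := h b hb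
  exact hyt.not_gt (hsub ht)

end RightContinuousPath

/-- The first time at which a path, known at nonnegative rational times only, exceeds the level
`y`. Restricting to countably many times makes it a measurable function of the path. -/
noncomputable def strictPassage (w : ℚ≥0 → ℝ) (y : ℝ) : ℝ≥0∞ :=
  ⨅ q : ℚ≥0, ⨅ _ : y < w q, ENNReal.ofReal q

/-- The increasing limit of the strict passage times of the levels below `y`: the time at which
the running supremum of the path reaches `y`, although the path may jump down at that time. -/
noncomputable def approachTime (w : ℚ≥0 → ℝ) (y : ℝ) : ℝ≥0∞ :=
  ⨆ y' : Iio y, strictPassage w y'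

section PassageTimes

variable {w : ℚ≥0 → ℝ} {g : ℝ → ℝ} {c y z t : ℝ}

lemma strictPassage_lt_iff {r : ℝ≥0∞} :
    strictPassage w y < r ↔ ∃ q : ℚ≥0, y < w q ∧ ENNReal.ofReal q < r := by
  simp only [strictPassage, iInf_lt_iff, exists_prop]

lemma strictPassage_le {q : ℚ≥0} (hq : y < w q) : strictPassage w y ≤ ENNReal.ofReal q :=
  iInf₂_le q hq

lemma strictPassage_mono (w : ℚ≥0 → ℝ) : Monotone (strictPassage w) := fun _ _ h =>
  le_iInf₂ fun _ hq => strictPassage_le (h.trans_lt hq)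

lemma strictPassage_le_approachTime (h : z < y) : strictPassage w z ≤ approachTime w y :=
  le_iSup (fun y' : Iio y => strictPassage w y') ⟨z, h⟩

lemma approachTime_eq_iSup {u : ℕ → ℝ} (hu : ∀ n, u n < y) (hlim : Tendsto u atTop (𝓝 y)) :
    approachTime w y = ⨆ n, strictPassage w (u n) := by
  refine le_antisymm (iSup_le fun ⟨y', hy'⟩ => ?_)
    (iSup_le fun n => strictPassage_le_approachTime (hu n))
  obtain ⟨n, hn⟩ := (hlim.eventually_const_lt hy').exists
  exact (strictPassage_mono w hn.le).trans (le_iSup (fun n => strictPassage w (u n)) n)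

lemma measurable_strictPassage (y : ℝ) : Measurable fun w => strictPassage w y := by
  refine measurable_of_Iio fun r => ?_
  have hset : (fun w => strictPassage w y) ⁻¹' Iio r =
      ⋃ q : ℚ≥0, {w | y < w q ∧ ENNReal.ofReal q < r} := by
    ext w
    simp only [mem_preimage, mem_Iio, strictPassage_lt_iff, mem_iUnion, mem_ofPred_eq]
  rw [hset]
  exact .iUnion fun q =>
    (measurableSet_lt measurable_const (measurable_pi_apply q)).inter (.const _)

lemma measurable_approachTime (y : ℝ) : Measurable fun w => approachTime w y := by
  obtain ⟨u, -, hu, hlim⟩ := exists_seq_strictMono_tendsto y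
  simp only [approachTime_eq_iSup hu hlim]
  exact .iSup fun n => measurable_strictPassage (u n)

namespace RightContinuousPath

lemma strictPassage_le (hg : RightContinuousPath g) (ht : 0 ≤ t) (h : y < g t) :
    strictPassage (fun q => g q) y ≤ ENNReal.ofReal t := by
  refine le_of_forall_gt_imp_ge_of_dense fun r hr => ?_
  by_contra! hlt
  have hr_top : r ≠ ⊤ := hlt.ne_top
  rw [ENNReal.ofReal_lt_iff_lt_toReal ht hr_top] at hr
  obtain ⟨q, hq, hyq⟩ := hg.exists_nnrat_mem_Ioo ht hr (Ioi_mem_nhds h)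
  exact (strictPassage_lt_iff.2 ⟨q, hyq, (ENNReal.ofReal_lt_iff_lt_toReal q.cast_nonneg hr_top).2
    hq.2⟩).not_gt hlt

lemma le_apply_strictPassage (hg : RightContinuousPath g)
    (hfin : strictPassage (fun q => g q) y < ⊤) :
    y ≤ g (strictPassage (fun q => g q) y).toReal := by
  refine hg.le_apply_of_forall_exists_mem_Ico ENNReal.toReal_nonneg fun t' ht' => ?_
  obtain ⟨q, hyq, hqt'⟩ :=
    strictPassage_lt_iff.1 ((ENNReal.lt_ofReal_iff_toReal_lt hfin.ne).2 ht')
  exact ⟨q, ⟨ENNReal.toReal_le_of_le_ofReal q.cast_nonneg (_root_.strictPassage_le hyq),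
    (ENNReal.ofReal_lt_ofReal_iff_of_nonneg q.cast_nonneg).1 hqt'⟩, hyq.le⟩

lemma strictPassage_add (hg : RightContinuousPath g) (ht : 0 ≤ t)
    (hle : ENNReal.ofReal t ≤ strictPassage (fun q => g q) (c + z)) :
    strictPassage (fun q => g q) (c + z) =
      ENNReal.ofReal t + strictPassage (fun q => g (t + q) - c) z := by
  refine le_antisymm ?_ ?_
  · simp only [strictPassage, ENNReal.add_iInf]
    refine le_iInf₂ fun q hq => ?_
    rw [← ENNReal.ofReal_add ht q.cast_nonneg]
    exact hg.strictPassage_le (by positivity) (by linarith)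
  · refine le_iInf₂ fun q hq => ?_
    have htq : t ≤ q :=
      (ENNReal.ofReal_le_ofReal_iff q.cast_nonneg).1 (hle.trans (_root_.strictPassage_le hq))
    have hshift : strictPassage (fun q => g (t + q) - c) z ≤ ENNReal.ofReal (q - t) :=
      (hg.comp_const_add_sub_const ht c).strictPassage_le (sub_nonneg.2 htq)
        (by rw [add_sub_cancel]; linarith)
    calc ENNReal.ofReal t + strictPassage (fun q => g (t + q) - c) z
        ≤ ENNReal.ofReal t + ENNReal.ofReal (q - t) := by gcongr
      _ = ENNReal.ofReal q := by rw [← ENNReal.ofReal_add ht (sub_nonneg.2 htq), add_sub_cancel]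

lemma approachTime_add (hg : RightContinuousPath g) (ht : 0 ≤ t)
    (hle : ENNReal.ofReal t ≤ strictPassage (fun q => g q) c) (hz : 0 < z) :
    approachTime (fun q => g q) (c + z) =
      ENNReal.ofReal t + approachTime (fun q => g (t + q) - c) z := by
  have hadd : ∀ y, 0 ≤ y → strictPassage (fun q => g q) (c + y) =
      ENNReal.ofReal t + strictPassage (fun q => g (t + q) - c) y := fun y hy =>
    hg.strictPassage_add ht (hle.trans (strictPassage_mono _ (le_add_of_nonneg_right hy)))
  refine le_antisymm (iSup_le fun ⟨y, hy⟩ => ?_) ?_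
  · calc strictPassage (fun q => g q) y
        ≤ strictPassage (fun q => g q) (c + max (y - c) 0) :=
          strictPassage_mono _ (by linarith [le_max_left (y - c) 0])
      _ = ENNReal.ofReal t + strictPassage (fun q => g (t + q) - c) (max (y - c) 0) :=
          hadd _ (le_max_right _ _)
      _ ≤ _ := by
          gcongr
          exact strictPassage_le_approachTime (max_lt (by linarith [mem_Iio.1 hy]) hz)
  · have : Nonempty (Iio z) := nonempty_Iio.to_subtype
    rw [approachTime, ENNReal.add_iSup]
    refine iSup_le fun ⟨y, hy⟩ => ?_
    calc ENNReal.ofReal t + strictPassage (fun q => g (t + q) - c) y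
        ≤ ENNReal.ofReal t + strictPassage (fun q => g (t + q) - c) (max y 0) := by
          gcongr
          exact strictPassage_mono _ (le_max_left _ _)
      _ = strictPassage (fun q => g q) (c + max y 0) := (hadd _ (le_max_right _ _)).symm
      _ ≤ _ := strictPassage_le_approachTime (add_lt_add_right (max_lt hy hz) c)

end RightContinuousPath

end PassageTimes

section HittingTimes

variable {Ω : Type*} {X : ℝ → Ω → ℝ} {ω : Ω} {y z f : ℝ}

lemma hitT_lt_iff {r : ℝ≥0∞} :
    hitT X y ω < r ↔ ∃ t : ℝ, (0 ≤ t ∧ y ≤ X t ω) ∧ ENNReal.ofReal t < r := by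
  simp only [hitT, sInf_lt_iff, exists_mem_image, mem_ofPred_eq]

lemma hitT_le {t : ℝ} (ht : 0 ≤ t) (h : y ≤ X t ω) : hitT X y ω ≤ ENNReal.ofReal t :=
  sInf_le ⟨t, ⟨ht, h⟩, rfl⟩

lemma hitT_mono (X : ℝ → Ω → ℝ) (ω : Ω) : Monotone fun y => hitT X y ω := fun _ _ h =>
  sInf_le_sInf (image_mono fun _ ht => ⟨ht.1, h.trans ht.2⟩)

lemma hitT_le_hitT_of_le_stopVal (hfin : hitT X z ω < ⊤) (h : y ≤ stopVal X z ω) :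
    hitT X y ω ≤ hitT X z ω :=
  (hitT_le ENNReal.toReal_nonneg h).trans_eq (ENNReal.ofReal_toReal hfin.ne)

lemma hitT_le_strictPassage : hitT X y ω ≤ strictPassage (fun q => X q ω) y :=
  le_iInf₂ fun q hq => hitT_le q.cast_nonneg hq.le

lemma le_stopVal (hω : RightContinuousPath (X · ω)) (hfin : hitT X y ω < ⊤) :
    y ≤ stopVal X y ω := by
  refine hω.le_apply_of_forall_exists_mem_Ico ENNReal.toReal_nonneg fun t' ht' => ?_
  obtain ⟨t, ⟨ht, hyt⟩, htt'⟩ := hitT_lt_iff.1 ((ENNReal.lt_ofReal_iff_toReal_lt hfin.ne).2 ht')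
  exact ⟨t, ⟨ENNReal.toReal_le_of_le_ofReal ht (hitT_le ht hyt),
    (ENNReal.ofReal_lt_ofReal_iff_of_nonneg ht).1 htt'⟩, hyt⟩

lemma approachTime_le_hitT (hω : RightContinuousPath (X · ω)) :
    approachTime (fun q => X q ω) y ≤ hitT X y ω := by
  refine iSup_le fun ⟨y', hy'⟩ => le_sInf ?_
  rintro _ ⟨t, ⟨ht, hyt⟩, rfl⟩
  exact hω.strictPassage_le ht (lt_of_lt_of_le hy' hyt)

lemma hitT_eq_approachTime (hω : RightContinuousPath (X · ω))
    (h : approachTime (fun q => X q ω) y < ⊤ →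
      y ≤ X (approachTime (fun q => X q ω) y).toReal ω) :
    hitT X y ω = approachTime (fun q => X q ω) y := by
  refine le_antisymm ?_ (approachTime_le_hitT hω)
  rcases eq_top_or_lt_top (approachTime (fun q => X q ω) y) with htop | hfin
  · exact htop ▸ le_top
  · exact (hitT_le ENNReal.toReal_nonneg (h hfin)).trans_eq (ENNReal.ofReal_toReal hfin.ne)

lemma hitT_le_hitT_iff (hω : RightContinuousPath (X · ω)) (hzy : z ≤ y) (hfin : hitT X z ω < ⊤) :
    hitT X y ω ≤ hitT X z ω ↔ y ≤ stopVal X z ω := by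
  refine ⟨fun hle => ?_, hitT_le_hitT_of_le_stopVal hfin⟩
  have heq : hitT X y ω = hitT X z ω := hle.antisymm (hitT_mono X ω hzy)
  simpa only [stopVal, heq] using le_stopVal hω (hle.trans_lt hfin)

lemma stopVal_eq_iff (hω : RightContinuousPath (X · ω)) (hzf : z ≤ f) (hfin : hitT X z ω < ⊤) :
    stopVal X z ω = f ↔
      hitT X f ω ≤ hitT X z ω ∧ ∀ k : ℕ, hitT X z ω < hitT X (f + 1 / (k + 1)) ω := by
  have hzf' (k : ℕ) : z ≤ f + 1 / ((k : ℝ) + 1) := by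
    linarith [Nat.one_div_pos_of_nat (α := ℝ) (n := k)]
  simp only [← not_le, hitT_le_hitT_iff hω hzf hfin, hitT_le_hitT_iff hω (hzf' _) hfin]
  refine ⟨fun h => ⟨h.ge, fun k => ?_⟩, fun ⟨hge, hlt⟩ => hge.antisymm' (not_lt.1 fun hgt => ?_)⟩
  · linarith [Nat.one_div_pos_of_nat (α := ℝ) (n := k)]
  · obtain ⟨k, hk⟩ := exists_nat_one_div_lt (sub_pos.2 hgt)
    exact hlt k (by linarith)

end HittingTimes

/-! ### The Markov property -/

section Markov

variable {Ω : Type*} {m0 : MeasurableSpace Ω} {P : Measure Ω} {F : Filtration ℝ m0}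
  {X : ℝ → Ω → ℝ}

/-- The path of `X` after time `s`, relative to its position at time `s` and sampled at the
nonnegative rational times, so that its law is a measure on a countable product. -/
def futureSample (X : ℝ → Ω → ℝ) (s : ℝ) (ω : Ω) : ℚ≥0 → ℝ :=
  fun q => X (s + q) ω - X s ω

-- For `J = ∅` the last time `J.sup id` is `0`, which is where `w 0 = 0` enters.
lemma exists_measurable_restrict_insert (J : Finset ℚ≥0) (m : ℚ≥0) :
    ∃ Φ : (J → ℝ) × ℝ → (↥(insert m J) → ℝ), Measurable Φ ∧
      ∀ w : ℚ≥0 → ℝ, w 0 = 0 →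
        (insert m J).restrict w = Φ (J.restrict w, w m - w (J.sup id)) := by
  refine ⟨fun v i => if h : (i : ℚ≥0) ∈ J then v.1 ⟨i, h⟩
    else (if h : J.sup id ∈ J then v.1 ⟨J.sup id, h⟩ else 0) + v.2, ?_, fun w hw => ?_⟩
  · refine measurable_pi_lambda _ fun i => ?_
    split_ifs <;> fun_prop
  · have hbase : (if J.sup id ∈ J then w (J.sup id) else 0) = w (J.sup id) := by
      rcases J.eq_empty_or_nonempty with rfl | hJ
      · simpa using hw.symm
      · exact if_pos (by simpa using J.exists_mem_eq_sup hJ id)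
    ext ⟨i, hi⟩
    by_cases hiJ : i ∈ J
    · simp [hiJ]
    · obtain rfl : i = m := (Finset.mem_insert.1 hi).resolve_right hiJ
      simp [hiJ, hbase]

namespace IsLevy

lemma measurable (hX : IsLevy P F X) (t : ℝ) : Measurable (X t) :=
  (hX.adapted t).mono (F.le t) le_rfl

lemma measurable_futureSample (hX : IsLevy P F X) (s : ℝ) : Measurable (futureSample X s) :=
  measurable_pi_lambda _ fun _ => (hX.measurable _).sub (hX.measurable _)

lemma map_restrict_prodMk (hX : IsLevy P F X) {E : Type*} [MeasurableSpace E] {s t : ℝ}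
    (hs : 0 ≤ s) (hst : s ≤ t) {A : Set Ω} (hA : MeasurableSet[F s] A) {Y : Ω → E}
    (hY : Measurable[F s] Y) :
    (P.restrict A).map (fun ω => (Y ω, X t ω - X s ω)) =
      ((P.restrict A).map Y).prod (P.map (X (t - s))) := by
  have := hX.isProb
  have hY' : Measurable Y := hY.mono (F.le s) le_rfl
  have hinc : Measurable fun ω => X t ω - X s ω := (hX.measurable t).sub (hX.measurable s)
  refine (Measure.prod_eq fun B C hB hC => ?_).symm
  have hindep := (Indep_iff _ _ _).1 (hX.indep s t hs hst) _ _ ⟨C, hC, rfl⟩ ((hY hB).inter hA)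
  rw [Measure.map_apply (hY'.prodMk hinc) (hB.prod hC), Measure.map_apply hY' hB,
    Measure.restrict_apply (hY' hB), Measure.restrict_apply (hY'.prodMk hinc (hB.prod hC)),
    ← hX.statInc s t hs hst, Measure.map_apply hinc hC, mul_comm, ← hindep]
  congr 1
  ext ω
  simp only [mem_inter_iff, mem_preimage, mem_prod]
  tauto

lemma exists_map_restrict_insert_futureSample (hX : IsLevy P F X) {J : Finset ℚ≥0} {m : ℚ≥0}
    (hm : ∀ j ∈ J, j < m) :
    ∃ Φ : (J → ℝ) × ℝ → (↥(insert m J) → ℝ), Measurable Φ ∧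
      ∀ s, 0 ≤ s → ∀ A, MeasurableSet[F s] A →
        (P.restrict A).map (fun ω => (insert m J).restrict (futureSample X s ω)) =
          (((P.restrict A).map fun ω => J.restrict (futureSample X s ω)).prod
            (P.map (X (m - (J.sup id : ℚ≥0))))).map Φ := by
  obtain ⟨Φ, hΦ, hrestrict⟩ := exists_measurable_restrict_insert J m
  refine ⟨Φ, hΦ, fun s hs A hA => ?_⟩
  have hsup : J.sup id ≤ m := Finset.sup_le fun j hj => (hm j hj).le
  set q : ℚ≥0 := J.sup id
  have hqm : s + (q : ℝ) ≤ s + m := by gcongr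
  have hsq : s ≤ s + (q : ℝ) := le_add_of_nonneg_right q.cast_nonneg
  have hpast : Measurable[F (s + q)] fun ω => J.restrict (futureSample X s ω) := by
    refine @measurable_pi_lambda _ _ _ (F (s + q)) _ _ fun j => ?_
    have hj : s + (j : ℝ) ≤ s + q := by
      gcongr
      exact Finset.le_sup (f := id) j.2
    exact ((hX.adapted _).mono (F.mono hj) le_rfl).sub ((hX.adapted s).mono (F.mono hsq) le_rfl)
  have hfactor : (fun ω => (insert m J).restrict (futureSample X s ω)) =
      Φ ∘ fun ω => (J.restrict (futureSample X s ω), X (s + m) ω - X (s + q) ω) := by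
    ext1 ω
    rw [hrestrict _ (by simp [futureSample])]
    simp only [futureSample, sub_sub_sub_cancel_right, Function.comp_apply, q]
  have hpair : Measurable fun ω =>
      (J.restrict (futureSample X s ω), X (s + m) ω - X (s + q) ω) :=
    (hpast.mono (F.le _) le_rfl).prodMk ((hX.measurable _).sub (hX.measurable _))
  rw [hfactor, ← Measure.map_map hΦ hpair,
    hX.map_restrict_prodMk (by positivity) hqm (F.mono hsq _ hA) hpast, add_sub_add_left_eq_sub]

lemma map_restrict_futureSample_finset (hX : IsLevy P F X) (J : Finset ℚ≥0) {s : ℝ} (hs : 0 ≤ s)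
    {A : Set Ω} (hA : MeasurableSet[F s] A) :
    (P.restrict A).map (fun ω => J.restrict (futureSample X s ω)) =
      P A • P.map fun ω => J.restrict (futureSample X 0 ω) := by
  have := hX.isProb
  induction J using Finset.induction_on_max with
  | empty =>
    have hconst (s : ℝ) : (fun ω => (∅ : Finset ℚ≥0).restrict (futureSample X s ω)) =
        fun _ => 0 := Subsingleton.elim _ _
    rw [hconst, hconst, Measure.map_const, Measure.map_const, Measure.restrict_apply_univ,
      measure_univ, one_smul]
  | insert m J hm ih =>
    obtain ⟨Φ, -, hΦ⟩ := hX.exists_map_restrict_insert_futureSample hm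
    have hΦ₀ := hΦ 0 le_rfl univ MeasurableSet.univ
    rw [Measure.restrict_univ] at hΦ₀
    rw [hΦ s hs A hA, hΦ₀, ih, Measure.prod_smul_left, Measure.map_smul]

lemma map_restrict_futureSample (hX : IsLevy P F X) {s : ℝ} (hs : 0 ≤ s) {A : Set Ω}
    (hA : MeasurableSet[F s] A) :
    (P.restrict A).map (futureSample X s) = P A • P.map (futureSample X 0) := by
  have := hX.isProb
  have := Measure.smul_finite (P.map (futureSample X 0)) (measure_ne_top P A)
  refine IsProjectiveLimit.unique
    (P := fun J : Finset ℚ≥0 => (P A • P.map (futureSample X 0)).map J.restrict)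
    (fun J => ?_) (fun J => rfl)
  beta_reduce
  rw [Measure.map_map J.measurable_restrict (hX.measurable_futureSample s), Measure.map_smul,
    Measure.map_map J.measurable_restrict (hX.measurable_futureSample 0)]
  exact hX.map_restrict_futureSample_finset J hs hA

lemma hasLaw_futureSample_comp (hX : IsLevy P F X) {ι : Type*} [Countable ι]
    [MeasurableSpace ι] [DiscreteMeasurableSpace ι] {c : ι → ℝ} (hc : ∀ i, 0 ≤ c i)
    {J : Ω → ι} (hJ : Measurable J) {D : Set Ω}
    (hD : ∀ i, MeasurableSet[F (c i)] (D ∩ J ⁻¹' {i})) :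
    HasLaw (fun ω => futureSample X (c (J ω)) ω) (P D • P.map (futureSample X 0))
      (P.restrict D) := by
  have hmeas : Measurable fun ω => futureSample X (c (J ω)) ω :=
    (measurable_from_prod_countable_left (f := fun p : Ω × ι => futureSample X (c p.2) p.1)
      fun i => hX.measurable_futureSample (c i)).comp (measurable_id.prodMk hJ)
  refine ⟨hmeas.aemeasurable, ?_⟩
  have hDm (i : ι) : MeasurableSet (D ∩ J ⁻¹' {i}) := F.le _ _ (hD i)
  have hdisj : Pairwise (Function.onFun Disjoint fun i => D ∩ J ⁻¹' {i}) := fun i j hij =>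
    (pairwise_disjoint_fiber J hij).mono inter_subset_right inter_subset_right
  have hunion : ⋃ i, D ∩ J ⁻¹' {i} = D := by
    rw [← inter_iUnion, ← preimage_iUnion, iUnion_of_singleton, preimage_univ, inter_univ]
  have hpiece (i : ι) : (P.restrict (D ∩ J ⁻¹' {i})).map (fun ω => futureSample X (c (J ω)) ω) =
      P (D ∩ J ⁻¹' {i}) • P.map (futureSample X 0) := by
    rw [← hX.map_restrict_futureSample (hc i) (hD i)]
    refine Measure.map_congr ?_
    filter_upwards [ae_restrict_mem (hDm i)] with ω hω
    rw [mem_singleton_iff.1 hω.2]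
  have hsum : P.restrict D = Measure.sum fun i => P.restrict (D ∩ J ⁻¹' {i}) := by
    rw [← Measure.restrict_iUnion hdisj hDm, hunion]
  rw [hsum, Measure.map_sum hmeas.aemeasurable]
  ext C hC
  simp only [hpiece, Measure.sum_apply _ hC, Measure.smul_apply, smul_eq_mul,
    ENNReal.tsum_mul_right, ← measure_iUnion hdisj hDm, hunion]

end IsLevy

end Markov

/-! ### Optional times and the strong Markov property -/

/-- `T` is an optional time of the filtration `F`: the event `T < t` is known at each real time
`t`. For a right-continuous filtration this is the same as being a stopping time. -/
def IsOptionalTime {Ω : Type*} {m0 : MeasurableSpace Ω} (F : Filtration ℝ m0) (T : Ω → ℝ≥0∞) :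
    Prop :=
  ∀ t : ℝ, MeasurableSet[F t] {ω | T ω < ENNReal.ofReal t}

lemma tendsto_floor_add_one_div {t : ℝ} (ht : 0 ≤ t) :
    Tendsto (fun n : ℕ => ((⌊t * (n + 1)⌋₊ : ℝ) + 1) / (n + 1)) atTop (𝓝[≥] t) := by
  have hlower (n : ℕ) : t ≤ ((⌊t * (n + 1)⌋₊ : ℝ) + 1) / (n + 1) := by
    rw [le_div_iff₀ (by positivity)]
    exact (Nat.lt_floor_add_one _).le
  have hupper (n : ℕ) : ((⌊t * (n + 1)⌋₊ : ℝ) + 1) / (n + 1) ≤ t + 1 / (n + 1) := by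
    rw [div_le_iff₀ (by positivity), add_mul, one_div_mul_cancel (by positivity)]
    gcongr
    exact Nat.floor_le (by positivity)
  refine tendsto_nhdsWithin_iff.2 ⟨?_, .of_forall hlower⟩
  refine tendsto_of_tendsto_of_tendsto_of_le_of_le tendsto_const_nhds ?_ hlower hupper
  simpa using tendsto_one_div_add_atTop_nhds_zero_nat.const_add t

lemma hasLaw_of_ae_tendsto {Ω E : Type*} {m0 : MeasurableSpace Ω} [TopologicalSpace E]
    [TopologicalSpace.PseudoMetrizableSpace E] [MeasurableSpace E] [BorelSpace E]
    {μ : Measure Ω} [IsFiniteMeasure μ] {ν : Measure E} [IsFiniteMeasure ν]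
    {Z : ℕ → Ω → E} {Z' : Ω → E} (hZ : ∀ n, HasLaw (Z n) ν μ)
    (hlim : ∀ᵐ ω ∂μ, Tendsto (Z · ω) atTop (𝓝 (Z' ω))) : HasLaw Z' ν μ := by
  have hZ' : AEMeasurable Z' μ :=
    aemeasurable_of_tendsto_metrizable_ae atTop (fun n => (hZ n).aemeasurable) hlim
  refine ⟨hZ', ext_of_forall_integral_eq_of_IsFiniteMeasure fun φ => ?_⟩
  have hconst (n : ℕ) : ∫ ω, φ (Z n ω) ∂μ = ∫ z, φ z ∂ν :=
    (hZ n).integral_comp φ.continuous.aestronglyMeasurable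
  have htendsto : Tendsto (fun n => ∫ ω, φ (Z n ω) ∂μ) atTop (𝓝 (∫ ω, φ (Z' ω) ∂μ)) := by
    refine tendsto_integral_of_dominated_convergence (fun _ => ‖φ‖)
      (fun n => (φ.continuous.measurable.comp_aemeasurable
        (hZ n).aemeasurable).aestronglyMeasurable)
      (integrable_const _) (fun n => .of_forall fun ω => φ.norm_coe_le_norm _) ?_
    filter_upwards [hlim] with ω hω
    exact (φ.continuous.tendsto _).comp hω
  rw [integral_map hZ' φ.continuous.aestronglyMeasurable]
  simp only [hconst] at htendsto
  exact tendsto_nhds_unique htendsto tendsto_const_nhds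

lemma RightContinuousPath.continuousWithinAt_futureSample {Ω : Type*} {X : ℝ → Ω → ℝ} {ω : Ω}
    (hω : RightContinuousPath (X · ω)) {s : ℝ} (hs : 0 ≤ s) :
    ContinuousWithinAt (futureSample X · ω) (Ici s) s := by
  refine continuousWithinAt_pi.2 fun q => ?_
  have hmaps : MapsTo (fun u => u + (q : ℝ)) (Ici s) (Ici (s + q)) := fun u hu =>
    add_le_add_left (mem_Ici.1 hu) _
  exact (ContinuousWithinAt.comp (x := s) (hω (s + q) (by positivity)) (by fun_prop) hmaps).sub
    (hω s hs)

section StrongMarkov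

variable {Ω : Type*} {m0 : MeasurableSpace Ω} {P : Measure Ω} {F : Filtration ℝ m0}
  {X : ℝ → Ω → ℝ} {T : Ω → ℝ≥0∞}

namespace IsOptionalTime

lemma measurable (hT : IsOptionalTime F T) : Measurable T := by
  refine measurable_of_Iio fun r => ?_
  have hset : T ⁻¹' Iio r = ⋃ q : ℚ, ⋃ _ : ENNReal.ofReal q < r, {ω | T ω < ENNReal.ofReal q} := by
    ext ω
    simp only [mem_preimage, mem_Iio, mem_iUnion, exists_prop, mem_ofPred_eq]
    refine ⟨fun h => ?_, fun ⟨q, hqr, hTq⟩ => hTq.trans hqr⟩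
    obtain ⟨q, -, hTq, hqr⟩ := ENNReal.lt_iff_exists_rat_btwn.1 h
    exact ⟨q, hqr, hTq⟩
  rw [hset]
  exact .iUnion fun q => .iUnion fun _ => F.le _ _ (hT q)

lemma iSup {ι : Type*} [Countable ι] {τ : ι → Ω → ℝ≥0∞} (hτ : ∀ i, IsOptionalTime F (τ i)) :
    IsOptionalTime F fun ω => ⨆ i, τ i ω := by
  intro t
  have hset : {ω | ⨆ i, τ i ω < ENNReal.ofReal t} =
      ⋃ q : ℚ, ⋃ _ : ENNReal.ofReal q < ENNReal.ofReal t,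
        ⋂ i, {ω | τ i ω < ENNReal.ofReal q} := by
    ext ω
    simp only [mem_iUnion, mem_iInter, exists_prop, mem_ofPred_eq]
    refine ⟨fun h => ?_, fun ⟨q, hqt, hτq⟩ => (iSup_le fun i => (hτq i).le).trans_lt hqt⟩
    obtain ⟨q, -, hτq, hqt⟩ := ENNReal.lt_iff_exists_rat_btwn.1 h
    exact ⟨q, hqt, fun i => (le_iSup (τ · ω) i).trans_lt hτq⟩
  rw [hset]
  refine .iUnion fun q => .iUnion fun hqt => .iInter fun i => ?_
  exact F.mono (ENNReal.ofReal_lt_ofReal_iff'.1 hqt).1.le _ (hτ i q)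

lemma measurableSet_inter_floor_preimage (hT : IsOptionalTime F T) (n j : ℕ) :
    MeasurableSet[F ((j + 1) / (n + 1))]
      ({ω | T ω < ⊤} ∩ (fun ω => ⌊(T ω).toReal * (n + 1)⌋₊) ⁻¹' {j}) := by
  have hset : {ω | T ω < ⊤} ∩ (fun ω => ⌊(T ω).toReal * (n + 1)⌋₊) ⁻¹' {j} =
      {ω | T ω < ENNReal.ofReal ((j + 1) / (n + 1))} \
        {ω | T ω < ENNReal.ofReal (j / (n + 1))} := by
    ext ω
    rcases eq_top_or_lt_top (T ω) with htop | hfin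
    · simp [htop]
    · simp only [mem_inter_iff, mem_preimage, mem_singleton_iff, Set.mem_sdiff, mem_ofPred_eq,
        ENNReal.lt_ofReal_iff_toReal_lt hfin.ne, lt_div_iff₀ (Nat.cast_add_one_pos (α := ℝ) n),
        Nat.floor_eq_iff (mul_nonneg ENNReal.toReal_nonneg (Nat.cast_add_one_pos (α := ℝ) n).le),
        hfin, not_lt, true_and]
      exact and_comm
  rw [hset]
  refine (hT _).diff (F.mono ?_ _ (hT _))
  gcongr
  linarith

end IsOptionalTime

namespace IsLevy

lemma ae_rightContinuousPath (hX : IsLevy P F X) : ∀ᵐ ω ∂P, RightContinuousPath (X · ω) :=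
  hX.cadlag.mono fun _ hω => hω.1

lemma ae_zero (hX : IsLevy P F X) : ∀ᵐ ω ∂P, X 0 ω = 0 := by
  have := hX.isProb
  exact (prob_compl_eq_zero_iff (hX.measurable 0 (measurableSet_singleton 0))).2 hX.start

lemma isOptionalTime_congr (hX : IsLevy P F X) {T' : Ω → ℝ≥0∞} (hT : IsOptionalTime F T)
    (h : T' =ᵐ[P] T) : IsOptionalTime F T' := by
  intro t
  rcases le_or_gt t 0 with ht | ht
  · simp [ENNReal.ofReal_of_nonpos ht]
  · have hnull (A : Set Ω) (hA : A ⊆ {ω | T' ω ≠ T ω}) : MeasurableSet[F t] A :=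
      F.mono ht.le _ (hX.nullF0 A (measure_mono_null hA h))
    have hset : {ω | T' ω < ENNReal.ofReal t} =
        ({ω | T ω < ENNReal.ofReal t} \ {ω | T' ω ≠ T ω}) ∪
          ({ω | T' ω < ENNReal.ofReal t} ∩ {ω | T' ω ≠ T ω}) := by
      ext ω
      by_cases heq : T' ω = T ω <;> simp [heq]
    rw [hset]
    exact ((hT t).diff (hnull _ subset_rfl)).union (hnull _ inter_subset_right)

theorem hasLaw_futureSample_toReal (hX : IsLevy P F X) (hT : IsOptionalTime F T) :
    HasLaw (fun ω => futureSample X (T ω).toReal ω)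
      (P {ω | T ω < ⊤} • P.map (futureSample X 0)) (P.restrict {ω | T ω < ⊤}) := by
  have := hX.isProb
  have := Measure.smul_finite (P.map (futureSample X 0)) (measure_ne_top P {ω | T ω < ⊤})
  have hJ (n : ℕ) : Measurable fun ω => ⌊(T ω).toReal * (n + 1)⌋₊ :=
    Nat.measurable_floor.comp (hT.measurable.ennreal_toReal.mul_const _)
  have hgrid (n : ℕ) := hX.hasLaw_futureSample_comp (c := fun j : ℕ => ((j : ℝ) + 1) / (n + 1))
    (fun j => by positivity) (hJ n) (hT.measurableSet_inter_floor_preimage n)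
  refine hasLaw_of_ae_tendsto hgrid ?_
  filter_upwards [ae_restrict_of_ae hX.ae_rightContinuousPath] with ω hω
  exact (RightContinuousPath.continuousWithinAt_futureSample hω ENNReal.toReal_nonneg).tendsto.comp
    (tendsto_floor_add_one_div ENNReal.toReal_nonneg)

end IsLevy

end StrongMarkov

/-! ### Quasi-left-continuity -/

/-- The sampled paths that are farther than `ε` from the origin at some time before `δ`. -/
def earlyExcursion (ε δ : ℝ) : Set (ℚ≥0 → ℝ) :=
  {w | ∃ q : ℚ≥0, (q : ℝ) < δ ∧ ε < |w q|}

lemma measurableSet_earlyExcursion (ε δ : ℝ) : MeasurableSet (earlyExcursion ε δ) := by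
  have hset : earlyExcursion ε δ = ⋃ q : ℚ≥0, ⋃ _ : (q : ℝ) < δ, {w | ε < |w q|} := by
    ext w
    simp only [earlyExcursion, mem_ofPred_eq, mem_iUnion, exists_prop]
  rw [hset]
  exact .iUnion fun q => .iUnion fun _ =>
    measurableSet_lt measurable_const (measurable_pi_apply q).abs

lemma earlyExcursion_mono (ε : ℝ) : Monotone (earlyExcursion ε) := fun _ _ h _ ⟨q, hq, hw⟩ =>
  ⟨q, hq.trans_le h, hw⟩

section QuasiLeftContinuity

variable {Ω : Type*} {m0 : MeasurableSpace Ω} {P : Measure Ω} {F : Filtration ℝ m0}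
  {X : ℝ → Ω → ℝ} {ω : Ω}

namespace RightContinuousPath

lemma exists_futureSample_notMem_earlyExcursion (hω : RightContinuousPath (X · ω)) {s ε : ℝ}
    (hs : 0 ≤ s) (hε : 0 < ε) :
    ∃ n : ℕ, futureSample X s ω ∉ earlyExcursion ε (1 / (n + 1)) := by
  obtain ⟨b, hb, hsub⟩ := (mem_nhdsGE_iff_exists_Ico_subset' (lt_add_one s)).1
    (hω s hs (Metric.closedBall_mem_nhds _ hε))
  obtain ⟨n, hn⟩ := exists_nat_one_div_lt (sub_pos.2 (mem_Ioi.1 hb))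
  refine ⟨n, fun ⟨q, hq, hw⟩ => hw.not_ge ?_⟩
  exact hsub ⟨le_add_of_nonneg_right q.cast_nonneg, by linarith⟩

lemma futureSample_mem_earlyExcursion (hω : RightContinuousPath (X · ω)) {s t ε δ : ℝ}
    (hs : 0 ≤ s) (hst : s ≤ t) (htδ : t < s + δ) (hε : ε < |X t ω - X s ω|) :
    futureSample X s ω ∈ earlyExcursion ε δ := by
  have hshift : RightContinuousPath fun u => X (s + u) ω - X s ω :=
    hω.comp_const_add_sub_const hs _
  obtain ⟨q, hq, hlarge⟩ := hshift.exists_nnrat_mem_Ioo (sub_nonneg.2 hst)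
    (sub_lt_iff_lt_add'.2 htδ) (U := {v | ε < |v|})
    ((isOpen_lt continuous_const continuous_abs).mem_nhds (by simpa using hε))
  exact ⟨q, hq.2, hlarge⟩

end RightContinuousPath

namespace IsLevy

lemma tendsto_measure_futureSample_mem_earlyExcursion (hX : IsLevy P F X) {ε : ℝ} (hε : 0 < ε) :
    Tendsto (fun n : ℕ => P {ω | futureSample X 0 ω ∈ earlyExcursion ε (1 / (n + 1))}) atTop
      (𝓝 0) := by
  have := hX.isProb
  have hnull : P (⋂ n : ℕ, {ω | futureSample X 0 ω ∈ earlyExcursion ε (1 / (n + 1))}) = 0 := by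
    rw [measure_eq_zero_iff_ae_notMem]
    filter_upwards [hX.ae_rightContinuousPath] with ω hω hmem
    obtain ⟨n, hn⟩ :=
      RightContinuousPath.exists_futureSample_notMem_earlyExcursion hω le_rfl hε
    exact hn (mem_iInter.1 hmem n)
  rw [← hnull]
  refine tendsto_measure_iInter_atTop
    (fun n => (hX.measurable_futureSample 0 (measurableSet_earlyExcursion _ _)).nullMeasurableSet)
    (fun i j hij ω hω => earlyExcursion_mono ε (Nat.one_div_le_one_div hij) hω)
    ⟨0, measure_ne_top _ _⟩

lemma measure_futureSample_toReal_mem_le (hX : IsLevy P F X) {T : Ω → ℝ≥0∞}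
    (hT : IsOptionalTime F T) {C : Set (ℚ≥0 → ℝ)} (hC : MeasurableSet C) :
    P.restrict {ω | T ω < ⊤} {ω | futureSample X (T ω).toReal ω ∈ C} ≤
      P {ω | futureSample X 0 ω ∈ C} := by
  have := hX.isProb
  rw [(hX.hasLaw_futureSample_toReal hT).measure_eq (p := (· ∈ C)) hC, Measure.smul_apply,
    smul_eq_mul, Measure.map_apply (hX.measurable_futureSample 0) (by exact hC)]
  exact mul_le_of_le_one_left' prob_le_one

lemma measure_le_dist_toReal_le (hX : IsLevy P F X) {S T : Ω → ℝ≥0∞} (hT : IsOptionalTime F T)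
    (hS : Measurable S) (hTS : ∀ ω, T ω ≤ S ω) {ε ε' δ : ℝ} (hε : ε' < ε) :
    P.restrict {ω | S ω < ⊤} {ω | ε ≤ dist (X (T ω).toReal ω) (X (S ω).toReal ω)} ≤
      P.restrict {ω | S ω < ⊤} {ω | δ ≤ dist (T ω).toReal (S ω).toReal} +
        P {ω | futureSample X 0 ω ∈ earlyExcursion ε' δ} := by
  have hsub : {ω | S ω < ⊤} ⊆ {ω | T ω < ⊤} := fun ω hω => (hTS ω).trans_lt hω
  calc P.restrict {ω | S ω < ⊤} {ω | ε ≤ dist (X (T ω).toReal ω) (X (S ω).toReal ω)}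
      ≤ P.restrict {ω | S ω < ⊤} ({ω | δ ≤ dist (T ω).toReal (S ω).toReal} ∪
          {ω | futureSample X (T ω).toReal ω ∈ earlyExcursion ε' δ}) := by
        refine measure_mono_ae ?_
        filter_upwards [ae_restrict_of_ae hX.ae_rightContinuousPath,
          ae_restrict_mem (measurableSet_lt hS measurable_const)] with ω hω hSω hdist
        refine or_iff_not_imp_left.2 fun hclose => ?_
        have hle : (T ω).toReal ≤ (S ω).toReal := ENNReal.toReal_mono hSω.ne (hTS ω)
        have hlt : (S ω).toReal < (T ω).toReal + δ := by
          rw [mem_ofPred_eq, not_le, dist_comm, Real.dist_eq, abs_of_nonneg (sub_nonneg.2 hle)]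
            at hclose
          linarith
        refine RightContinuousPath.futureSample_mem_earlyExcursion hω ENNReal.toReal_nonneg
          hle hlt (hε.trans_le ?_)
        rwa [← Real.dist_eq, dist_comm]
    _ ≤ _ := measure_union_le _ _
    _ ≤ _ := add_le_add le_rfl <| (Measure.restrict_mono_set P hsub _).trans <|
        hX.measure_futureSample_toReal_mem_le hT (measurableSet_earlyExcursion _ _)

theorem tendstoInMeasure_iSup (hX : IsLevy P F X) {τ : ℕ → Ω → ℝ≥0∞}
    (hτ : ∀ k, IsOptionalTime F (τ k)) (hmono : ∀ ω, Monotone (τ · ω)) :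
    TendstoInMeasure (P.restrict {ω | ⨆ k, τ k ω < ⊤}) (fun k ω => X (τ k ω).toReal ω) atTop
      (fun ω => X (⨆ k, τ k ω).toReal ω) := by
  have := hX.isProb
  set μ := P.restrict {ω | ⨆ k, τ k ω < ⊤}
  have hS : Measurable fun ω => ⨆ k, τ k ω := (IsOptionalTime.iSup hτ).measurable
  have htimes : TendstoInMeasure μ (fun k ω => (τ k ω).toReal) atTop
      fun ω => (⨆ k, τ k ω).toReal := by
    refine tendstoInMeasure_of_tendsto_ae
      (fun k => (hτ k).measurable.ennreal_toReal.aestronglyMeasurable) ?_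
    filter_upwards [ae_restrict_mem (measurableSet_lt hS measurable_const)] with ω hω
    exact (ENNReal.tendsto_toReal hω.ne).comp (tendsto_atTop_iSup (hmono ω))
  rw [tendstoInMeasure_iff_dist] at htimes ⊢
  refine fun ε hε => ENNReal.tendsto_nhds_zero.2 fun η hη => ?_
  have hη2 : 0 < η / 2 := ENNReal.half_pos hη.ne'
  obtain ⟨n, hn⟩ := (ENNReal.tendsto_nhds_zero.1
    (hX.tendsto_measure_futureSample_mem_earlyExcursion (half_pos hε)) _ hη2).exists
  filter_upwards [ENNReal.tendsto_nhds_zero.1 (htimes _ (Nat.one_div_pos_of_nat (n := n))) _ hη2]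
    with k hk
  calc _ ≤ _ := hX.measure_le_dist_toReal_le (hτ k) hS
        (fun ω => le_iSup (τ · ω) k) (half_lt_self hε)
    _ ≤ η / 2 + η / 2 := add_le_add hk hn
    _ = η := ENNReal.add_halves η

end IsLevy

lemma isOptionalTime_strictPassage (hX : ∀ t, Measurable[F t] (X t)) (y : ℝ) :
    IsOptionalTime F fun ω => strictPassage (fun q => X q ω) y := by
  intro t
  have hset : {ω | strictPassage (fun q => X q ω) y < ENNReal.ofReal t} =
      ⋃ q : ℚ≥0, ⋃ _ : ENNReal.ofReal q < ENNReal.ofReal t, X q ⁻¹' Ioi y := by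
    ext ω
    simp only [mem_ofPred_eq, strictPassage_lt_iff, mem_iUnion, mem_preimage, mem_Ioi,
      exists_prop, and_comm]
  rw [hset]
  refine .iUnion fun q => .iUnion fun hqt => ?_
  exact F.mono (ENNReal.ofReal_lt_ofReal_iff'.1 hqt).1.le _ (hX q measurableSet_Ioi)

namespace IsLevy

lemma ae_le_apply_approachTime (hX : IsLevy P F X) (y : ℝ) :
    ∀ᵐ ω ∂P, approachTime (fun q => X q ω) y < ⊤ →
      y ≤ X (approachTime (fun q => X q ω) y).toReal ω := by
  obtain ⟨u, hu_mono, hu_lt, hu_lim⟩ := exists_seq_strictMono_tendsto y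
  simp only [approachTime_eq_iSup hu_lt hu_lim]
  have hτ (n : ℕ) := isOptionalTime_strictPassage hX.adapted (u n)
  obtain ⟨ns, hns, hlim⟩ := (hX.tendstoInMeasure_iSup hτ
    fun ω => (strictPassage_mono _).comp hu_mono.monotone).exists_seq_tendsto_ae
  rw [ae_restrict_iff' (measurableSet_lt (IsOptionalTime.iSup hτ).measurable measurable_const)]
    at hlim
  filter_upwards [hlim, hX.ae_rightContinuousPath] with ω hω hrc hfin
  refine le_of_tendsto_of_tendsto' (hu_lim.comp hns.tendsto_atTop) (hω hfin) fun k => ?_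
  exact RightContinuousPath.le_apply_strictPassage hrc
    ((le_iSup (fun n => strictPassage (fun q => X q ω) (u n)) _).trans_lt hfin)

lemma hitT_ae_eq_approachTime (hX : IsLevy P F X) (y : ℝ) :
    hitT X y =ᵐ[P] fun ω => approachTime (fun q => X q ω) y := by
  filter_upwards [hX.ae_rightContinuousPath, hX.ae_le_apply_approachTime y] with ω hω hle
  exact hitT_eq_approachTime hω hle

lemma isOptionalTime_hitT (hX : IsLevy P F X) (y : ℝ) : IsOptionalTime F (hitT X y) := by
  refine hX.isOptionalTime_congr ?_ (hX.hitT_ae_eq_approachTime y)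
  obtain ⟨u, -, hu_lt, hu_lim⟩ := exists_seq_strictMono_tendsto y
  simp only [approachTime_eq_iSup hu_lt hu_lim]
  exact .iSup fun n => isOptionalTime_strictPassage hX.adapted (u n)

end IsLevy

end QuasiLeftContinuity

/-! ### Levels with a degenerate passage law -/

/-- The sampled path `w`, if it ever reaches the level `z`, does so by landing exactly at `f`.
This is phrased through the times at which the levels `z`, `f` and those just above `f` are
reached, because `w` need not be sampled at the passage time itself. -/
def LandsAt (z f : ℝ) (w : ℚ≥0 → ℝ) : Prop :=
  approachTime w z < ⊤ → approachTime w f ≤ approachTime w z ∧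
    ∀ k : ℕ, approachTime w z < approachTime w (f + 1 / (k + 1))

lemma measurable_landsAt (z f : ℝ) : Measurable (LandsAt z f) := by
  have hmeas := measurable_approachTime
  refine measurableSet_setOfPred.1 <| (measurableSet_lt (hmeas z) measurable_const).imp <|
    (measurableSet_le (hmeas f) (hmeas z)).inter ?_
  exact measurableSet_setOfPred.2 <| .forall fun k =>
    measurableSet_setOfPred.1 (measurableSet_lt (hmeas z) (hmeas _))

lemma RightContinuousPath.landsAt_add_iff {g : ℝ → ℝ} {c z f t : ℝ} (hg : RightContinuousPath g)
    (ht : 0 ≤ t) (hle : ENNReal.ofReal t ≤ strictPassage (fun q => g q) c) (hz : 0 < z)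
    (hzf : z ≤ f) :
    LandsAt (c + z) (c + f) (fun q => g q) ↔ LandsAt z f fun q => g (t + q) - c := by
  have hadd (y : ℝ) (hy : z ≤ y) := hg.approachTime_add ht hle (hz.trans_le hy)
  have hzf' (k : ℕ) : z ≤ f + 1 / ((k : ℝ) + 1) := by
    linarith [Nat.one_div_pos_of_nat (α := ℝ) (n := k)]
  simp only [LandsAt, add_assoc, hadd z le_rfl, hadd f hzf, hadd _ (hzf' _),
    ENNReal.add_lt_top, ENNReal.ofReal_lt_top, true_and,
    ENNReal.add_le_add_iff_left ENNReal.ofReal_ne_top,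
    ENNReal.add_lt_add_iff_left ENNReal.ofReal_ne_top]

section Carrier

variable {Ω : Type*} {m0 : MeasurableSpace Ω} {P : Measure Ω} {F : Filtration ℝ m0}
  {X : ℝ → Ω → ℝ} {a x z f : ℝ}

lemma Qfun_compl_singleton_eq_zero_iff :
    Qfun P X z {f}ᶜ = 0 ↔ ∀ᵐ ω ∂P, hitT X z ω < ⊤ → stopVal X z ω = f := by
  rw [Qfun, measure_eq_zero_iff_ae_notMem]
  simp only [mem_inter_iff, mem_ofPred_eq, mem_compl_iff, mem_singleton_iff, not_and', not_not]

lemma Qfun_compl_singleton_eq_zero_of_mem_Icc (h : Qfun P X x {f}ᶜ = 0) (hz : z ∈ Icc x f) :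
    Qfun P X z {f}ᶜ = 0 := by
  rw [Qfun_compl_singleton_eq_zero_iff] at h ⊢
  filter_upwards [h] with ω hω hfin
  have hle : hitT X x ω ≤ hitT X z ω := hitT_mono X ω hz.1
  have hval : stopVal X x ω = f := hω (hle.trans_lt hfin)
  have hge : hitT X z ω ≤ hitT X x ω :=
    hitT_le_hitT_of_le_stopVal (hle.trans_lt hfin) (hz.2.trans_eq hval.symm)
  rwa [stopVal, hge.antisymm hle]

namespace IsLevy

lemma ae_futureSample_toReal (hX : IsLevy P F X) {T : Ω → ℝ≥0∞} (hT : IsOptionalTime F T)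
    {p : (ℚ≥0 → ℝ) → Prop} (hp : Measurable p) (h : ∀ᵐ ω ∂P, p (futureSample X 0 ω)) :
    ∀ᵐ ω ∂P, T ω < ⊤ → p (futureSample X (T ω).toReal ω) := by
  have hmap : ∀ᵐ w ∂P.map (futureSample X 0), p w :=
    (ae_map_iff (hX.measurable_futureSample 0).aemeasurable (measurableSet_setOfPred.2 hp)).2 h
  have hlaw : ∀ᵐ ω ∂P.restrict {ω | T ω < ⊤}, p (futureSample X (T ω).toReal ω) :=
    ((hX.hasLaw_futureSample_toReal hT).ae_iff hp).2 (Measure.ae_smul_measure hmap _)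
  exact (ae_restrict_iff' (measurableSet_lt hT.measurable measurable_const)).1 hlaw

lemma ae_landsAt_iff (hX : IsLevy P F X) (hzf : z ≤ f) :
    ∀ᵐ ω ∂P, LandsAt z f (fun q => X q ω) ↔ (hitT X z ω < ⊤ → stopVal X z ω = f) := by
  filter_upwards [hX.ae_rightContinuousPath, hX.hitT_ae_eq_approachTime z,
    hX.hitT_ae_eq_approachTime f,
    ae_all_iff.2 fun k : ℕ => hX.hitT_ae_eq_approachTime (f + 1 / (k + 1))]
    with ω hω hz hf hk
  simp only [LandsAt, ← hz, ← hf, ← hk]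
  exact forall_congr' fun hfin => (stopVal_eq_iff hω hzf hfin).symm

lemma ae_landsAt_futureSample_zero (hX : IsLevy P F X) (hzf : z ≤ f)
    (h : Qfun P X z {f}ᶜ = 0) : ∀ᵐ ω ∂P, LandsAt z f (futureSample X 0 ω) := by
  filter_upwards [Qfun_compl_singleton_eq_zero_iff.1 h, hX.ae_landsAt_iff hzf, hX.ae_zero]
    with ω hω hiff hzero
  have hsample : futureSample X 0 ω = fun q : ℚ≥0 => X q ω := by
    ext q
    rw [futureSample, zero_add, hzero, sub_zero]
  rw [hsample]
  exact hiff.2 hω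

theorem Qfun_add_compl_singleton_eq_zero (hX : IsLevy P F X) (ha : Qfun P X a {a}ᶜ = 0)
    (hz : 0 < z) (hzf : z ≤ f) (h : Qfun P X z {f}ᶜ = 0) :
    Qfun P X (a + z) {a + f}ᶜ = 0 := by
  have hrestart := hX.ae_futureSample_toReal (hX.isOptionalTime_hitT a) (measurable_landsAt z f)
    (hX.ae_landsAt_futureSample_zero hzf h)
  rw [Qfun_compl_singleton_eq_zero_iff] at ha ⊢
  filter_upwards [hrestart, ha, hX.ae_rightContinuousPath,
    hX.ae_landsAt_iff (add_le_add_right hzf a)] with ω hlands hval hω hiff hfin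
  have hfin_a : hitT X a ω < ⊤ :=
    (hitT_mono X ω (le_add_of_nonneg_right hz.le)).trans_lt hfin
  have hle : ENNReal.ofReal (hitT X a ω).toReal ≤ strictPassage (fun q => X q ω) a :=
    (ENNReal.ofReal_toReal hfin_a.ne).trans_le hitT_le_strictPassage
  refine hiff.1 ((RightContinuousPath.landsAt_add_iff hω ENNReal.toReal_nonneg hle hz hzf).2 ?_)
    hfin
  have hsample : futureSample X (hitT X a ω).toReal ω =
      fun q : ℚ≥0 => X ((hitT X a ω).toReal + q) ω - a := by
    have hval_a : X (hitT X a ω).toReal ω = a := hval hfin_a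
    ext q
    rw [futureSample, hval_a]
  exact hsample ▸ hlands hfin_a

lemma Qfun_zero_compl_singleton_eq_zero (hX : IsLevy P F X) : Qfun P X 0 {0}ᶜ = 0 := by
  rw [Qfun_compl_singleton_eq_zero_iff]
  filter_upwards [hX.ae_zero] with ω hω _
  have hhit : hitT X 0 ω = 0 := by simpa using hitT_le le_rfl hω.ge
  rw [stopVal, hhit, ENNReal.toReal_zero, hω]

lemma Qfun_nat_mul_compl_singleton_eq_zero (hX : IsLevy P F X) (hf : 0 < f)
    (h : Qfun P X f {f}ᶜ = 0) (n : ℕ) : Qfun P X (n * f) {n * f}ᶜ = 0 := by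
  induction n with
  | zero => simpa only [Nat.cast_zero, zero_mul] using hX.Qfun_zero_compl_singleton_eq_zero
  | succ n ih =>
    simpa only [Nat.cast_succ, add_one_mul] using
      hX.Qfun_add_compl_singleton_eq_zero ih hf le_rfl h

lemma le_of_Qfun_compl_singleton_eq_zero (hX : IsLevy P F X)
    (hpos : 0 < P {ω | hitT X x ω < ⊤}) (h : Qfun P X x {f}ᶜ = 0) : x ≤ f := by
  obtain ⟨ω, hfin, hval, hω⟩ := ((frequently_ae_iff.2 hpos.ne').and_eventually
    ((Qfun_compl_singleton_eq_zero_iff.1 h).and hX.ae_rightContinuousPath)).exists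
  exact (le_stopVal hω hfin).trans_eq (hval hfin)

end IsLevy

end Carrier

/-- If `x > 0`, `P(T_x < ∞) > 0` and `Q^x = P(T_x < ∞)·δ_{f(x)}`, then `f(x) ≥ x` and
`⋃_{n ∈ ℕ₀} [x + n·f(x), (n+1)·f(x)] ⊆ 𝒜`, where `𝒜` is the set of levels whose
overshoot law is carried by a singleton. -/
theorem ladder_subset_of_singleton_carrier {Ω : Type*} {m0 : MeasurableSpace Ω}
    (P : Measure Ω) (F : MeasureTheory.Filtration ℝ m0) (X : ℝ → Ω → ℝ)
    (hX : IsLevy P F X)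
    (x : ℝ) (hx : 0 < x) (hpos : 0 < P {ω | hitT X x ω < ⊤})
    (fx : ℝ) (hcarr : Qfun P X x ({fx}ᶜ) = 0) :
    x ≤ fx ∧
    (⋃ n : ℕ, Set.Icc (x + (n : ℝ) * fx) (((n : ℝ) + 1) * fx)) ⊆
      {y : ℝ | ∃ r : ℝ, Qfun P X y ({r}ᶜ) = 0} := by
  have hxf : x ≤ fx := hX.le_of_Qfun_compl_singleton_eq_zero hpos hcarr
  have hf : Qfun P X fx {fx}ᶜ = 0 :=
    Qfun_compl_singleton_eq_zero_of_mem_Icc hcarr ⟨hxf, le_rfl⟩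
  refine ⟨hxf, iUnion_subset fun n y ⟨hlower, hupper⟩ => ⟨n * fx + fx, ?_⟩⟩
  have hbase : Qfun P X (n * fx) {n * fx}ᶜ = 0 :=
    hX.Qfun_nat_mul_compl_singleton_eq_zero (hx.trans_le hxf) hf n
  have hxy : x ≤ y - n * fx := by linarith
  have hyf : y - n * fx ≤ fx := by linarith
  have hz : Qfun P X (y - n * fx) {fx}ᶜ = 0 :=
    Qfun_compl_singleton_eq_zero_of_mem_Icc hcarr ⟨hxy, hyf⟩
  simpa only [add_sub_cancel] using
    hX.Qfun_add_compl_singleton_eq_zero hbase (hx.trans_le hxy) hyf hz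
end

section
/- Let X be a real-valued Lévy process on a filtered probability space satisfying the usual conditions. Then P(T_x < ∞) = 0 for some x > 0 if and only if P(T_x < ∞) = 0 for every x > 0. -/
open MeasureTheory ProbabilityTheory Filter Set
open scoped ENNReal Topology

/-!
If `P(X_t ≥ x / n) > 0` for some `t` and `n`, then `n` independent increments over time `t` are all
at least `x / n` with positive probability, so `X` reaches `x` by time `n t`. Hence if `X` almost
surely never reaches some `x > 0`, then `X_t ≤ 0` almost surely for each fixed `t`, and by right
continuity almost surely for all `t` at once, so no positive level is ever reached.
-/

section RightContinuousPaths

variable {T E : Type*} [TopologicalSpace T] [LinearOrder T] [OrderTopology T]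
  [DenselyOrdered T] [NoMaxOrder T] [TopologicalSpace E] {C : Set E}

theorem mem_of_forall_mem_dense_gt {D : Set T} {f : T → E} {t : T} (hC : IsClosed C)
    (hD : Dense D) (hf : ContinuousWithinAt f (Ici t) t) (hmem : ∀ s ∈ D, t < s → f s ∈ C) :
    f t ∈ C := by
  have t_mem_closure : t ∈ closure (Ioi t ∩ D) :=
    closure_minimal (hD.open_subset_closure_inter isOpen_Ioi) isClosed_closure
      (by rw [closure_Ioi]; exact self_mem_Ici)
  have hf' : ContinuousWithinAt f (Ioi t ∩ D) t :=
    hf.mono (inter_subset_left.trans Ioi_subset_Ici_self)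
  exact hC.closure_subset (hf'.mem_closure t_mem_closure fun s hs ↦ hmem s hs.2 hs.1)

theorem ae_forall_ge_mem_of_forall_ge_ae_mem [TopologicalSpace.SeparableSpace T]
    {Ω : Type*} {m0 : MeasurableSpace Ω} {P : Measure Ω} {X : T → Ω → E} {t₀ : T} (hC : IsClosed C)
    (hX : ∀ᵐ ω ∂P, ∀ t, t₀ ≤ t → ContinuousWithinAt (X · ω) (Ici t) t)
    (hmem : ∀ t, t₀ ≤ t → ∀ᵐ ω ∂P, X t ω ∈ C) :
    ∀ᵐ ω ∂P, ∀ t, t₀ ≤ t → X t ω ∈ C := by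
  obtain ⟨D, D_countable, D_dense⟩ := TopologicalSpace.exists_countable_dense T
  have mem_on_D : ∀ᵐ ω ∂P, ∀ s ∈ D, t₀ ≤ s → X s ω ∈ C :=
    (ae_ball_iff D_countable).2 fun s _ ↦ eventually_imp_distrib_left.2 (hmem s)
  filter_upwards [hX, mem_on_D] with ω hω mem_on_D t ht
  exact mem_of_forall_mem_dense_gt (f := (X · ω)) hC D_dense (hω t ht)
    fun s hs hts ↦ mem_on_D s hs (ht.trans hts.le)

end RightContinuousPaths

section FirstPassage

variable {Ω : Type*} {X : ℝ → Ω → ℝ} {x : ℝ}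

theorem hitT_lt_top_iff {ω : Ω} : hitT X x ω < ⊤ ↔ ∃ t, 0 ≤ t ∧ x ≤ X t ω := by
  simp [hitT, sInf_lt_iff, and_assoc]

theorem measure_hitT_lt_top_eq_zero_iff {m0 : MeasurableSpace Ω} {P : Measure Ω} :
    P {ω | hitT X x ω < ⊤} = 0 ↔ ∀ᵐ ω ∂P, ∀ t, 0 ≤ t → X t ω < x := by
  simp [ae_iff, hitT_lt_top_iff]

end FirstPassage

section IndepStatIncrements

variable {Ω : Type*} {m0 : MeasurableSpace Ω} {P : Measure Ω}

theorem measure_ge_mul_measure_ge_le_of_indepFun {E : Type*} [Add E] [Preorder E]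
    [AddLeftMono E] [AddRightMono E] [TopologicalSpace E] [ClosedIciTopology E]
    [MeasurableSpace E] [OpensMeasurableSpace E] {U V : Ω → E} (h : IndepFun U V P) (a b : E) :
    P {ω | a ≤ U ω} * P {ω | b ≤ V ω} ≤ P {ω | a + b ≤ U ω + V ω} :=
  calc P {ω | a ≤ U ω} * P {ω | b ≤ V ω}
      = P ({ω | a ≤ U ω} ∩ {ω | b ≤ V ω}) :=
        (h.measure_inter_preimage_eq_mul (Ici a) (Ici b) measurableSet_Ici measurableSet_Ici).symm
    _ ≤ P {ω | a + b ≤ U ω + V ω} := measure_mono fun _ ⟨hU, hV⟩ ↦ add_le_add (α := E) hU hV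

/-- Stationary increments over `[0, ∞)`, the increment after time `s` being independent of `X s`:
the part of the Lévy property that makes `(t, a) ↦ P(X_t ≥ a)` supermultiplicative, stated without
a filtration. Taking `s = t = 0` in `identDistrib` gives `X 0 = 0` almost surely. -/
structure HasIndepStatIncrements (P : Measure Ω) (X : ℝ → Ω → ℝ) : Prop where
  indepFun : ∀ s t, 0 ≤ s → 0 ≤ t → IndepFun (X s) (X (s + t) - X s) P
  identDistrib : ∀ s t, 0 ≤ s → 0 ≤ t → IdentDistrib (X (s + t) - X s) (X t) P P

theorem IsLevy.hasIndepStatIncrements {F : Filtration ℝ m0} {X : ℝ → Ω → ℝ}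
    (hX : IsLevy P F X) : HasIndepStatIncrements P X where
  indepFun s t hs ht :=
    (indep_of_indep_of_le_right (hX.indep s (s + t) hs (le_add_of_nonneg_right ht))
      (hX.adapted s).comap_le).symm
  identDistrib s t hs ht := by
    have measurable_X (r : ℝ) : Measurable (X r) := (hX.adapted r).mono (F.le r) le_rfl
    refine ⟨((measurable_X _).sub (measurable_X s)).aemeasurable, (measurable_X t).aemeasurable, ?_⟩
    simpa only [add_sub_cancel_left] using! hX.statInc s (s + t) hs (le_add_of_nonneg_right ht)

namespace HasIndepStatIncrements

variable {X : ℝ → Ω → ℝ} {x t : ℝ}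

theorem measure_ge_mul_measure_ge_le (hX : HasIndepStatIncrements P X) {s : ℝ} (hs : 0 ≤ s)
    (ht : 0 ≤ t) (a b : ℝ) :
    P {ω | a ≤ X s ω} * P {ω | b ≤ X t ω} ≤ P {ω | a + b ≤ X (s + t) ω} :=
  calc P {ω | a ≤ X s ω} * P {ω | b ≤ X t ω}
      = P {ω | a ≤ X s ω} * P {ω | b ≤ (X (s + t) - X s) ω} := by
        congr 1
        exact ((hX.identDistrib s t hs ht).measure_mem_eq measurableSet_Ici).symm
    _ ≤ P {ω | a + b ≤ X s ω + (X (s + t) - X s) ω} :=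
        measure_ge_mul_measure_ge_le_of_indepFun (hX.indepFun s t hs ht) a b
    _ = P {ω | a + b ≤ X (s + t) ω} := by simp only [Pi.sub_apply, add_sub_cancel]

theorem pow_measure_ge_le (hX : HasIndepStatIncrements P X) (ht : 0 ≤ t) (a : ℝ) {n : ℕ}
    (hn : 1 ≤ n) : P {ω | a ≤ X t ω} ^ n ≤ P {ω | n * a ≤ X (n * t) ω} := by
  induction n, hn using Nat.le_induction with
  | base => simp
  | succ n _ ih =>
    calc P {ω | a ≤ X t ω} ^ (n + 1)
        ≤ P {ω | n * a ≤ X (n * t) ω} * P {ω | a ≤ X t ω} := by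
          rw [pow_succ]
          gcongr
      _ ≤ P {ω | n * a + a ≤ X (n * t + t) ω} :=
          hX.measure_ge_mul_measure_ge_le (by positivity) ht _ _
      _ = P {ω | (n + 1 : ℕ) * a ≤ X ((n + 1 : ℕ) * t) ω} := by
          simp only [Nat.cast_succ, add_one_mul]

theorem ae_lt_div_natCast (hX : HasIndepStatIncrements P X)
    (hlt : ∀ t, 0 ≤ t → ∀ᵐ ω ∂P, X t ω < x) (ht : 0 ≤ t) {n : ℕ} (hn : n ≠ 0) :
    ∀ᵐ ω ∂P, X t ω < x / n := by
  have measure_ge_eq_zero : P {ω | n * (x / n) ≤ X (n * t) ω} = 0 := by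
    rw [mul_div_cancel₀ x (Nat.cast_ne_zero.2 hn)]
    simpa only [ae_iff, not_lt] using hlt (n * t) (by positivity)
  have pow_le := hX.pow_measure_ge_le ht (x / n) (Nat.one_le_iff_ne_zero.2 hn)
  have pow_eq_zero : P {ω | x / n ≤ X t ω} ^ n = 0 :=
    nonpos_iff_eq_zero.1 (pow_le.trans_eq measure_ge_eq_zero)
  simpa only [ae_iff, not_lt] using (pow_eq_zero_iff hn).1 pow_eq_zero

theorem ae_nonpos (hX : HasIndepStatIncrements P X)
    (hlt : ∀ t, 0 ≤ t → ∀ᵐ ω ∂P, X t ω < x) (ht : 0 ≤ t) : ∀ᵐ ω ∂P, X t ω ≤ 0 := by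
  have ae_lt_all : ∀ᵐ ω ∂P, ∀ n : ℕ, n ≠ 0 → X t ω < x / n :=
    ae_all_iff.2 fun _ ↦ eventually_imp_distrib_left.2 (hX.ae_lt_div_natCast hlt ht)
  filter_upwards [ae_lt_all] with ω hω
  refine ge_of_tendsto (tendsto_const_div_atTop_nhds_zero_nat x) ?_
  filter_upwards [eventually_ne_atTop 0] with n hn using (hω n hn).le

end HasIndepStatIncrements

theorem never_passes_some_iff_all_general {X : ℝ → Ω → ℝ} (hX : HasIndepStatIncrements P X)
    (hcont : ∀ᵐ ω ∂P, ∀ t, 0 ≤ t → ContinuousWithinAt (X · ω) (Ici t) t) :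
    (∃ x, 0 < x ∧ P {ω | hitT X x ω < ⊤} = 0) ↔ ∀ x, 0 < x → P {ω | hitT X x ω < ⊤} = 0 := by
  simp only [measure_hitT_lt_top_eq_zero_iff]
  refine ⟨?_, fun h ↦ ⟨1, one_pos, h 1 one_pos⟩⟩
  rintro ⟨x, -, never_passes_x⟩ y hy
  have ae_lt (t : ℝ) (ht : 0 ≤ t) : ∀ᵐ ω ∂P, X t ω < x :=
    never_passes_x.mono fun ω hω ↦ hω t ht
  have ae_forall_nonpos : ∀ᵐ ω ∂P, ∀ t, 0 ≤ t → X t ω ∈ Iic 0 :=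
    ae_forall_ge_mem_of_forall_ge_ae_mem isClosed_Iic hcont fun _ ht ↦ hX.ae_nonpos ae_lt ht
  exact ae_forall_nonpos.mono fun ω hω t ht ↦ (hω t ht).trans_lt hy

end IndepStatIncrements

/-- For a Lévy process, `P(T_x < ∞) = 0` for some `x > 0` iff `P(T_x < ∞) = 0` for
every `x > 0`. -/
theorem never_passes_some_iff_all {Ω : Type*} {m0 : MeasurableSpace Ω}
    (P : Measure Ω) (F : MeasureTheory.Filtration ℝ m0) (X : ℝ → Ω → ℝ)
    (hX : IsLevy P F X) :
    (∃ x : ℝ, 0 < x ∧ P {ω | hitT X x ω < ⊤} = 0) ↔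
    (∀ x : ℝ, 0 < x → P {ω | hitT X x ω < ⊤} = 0) := by
  exact never_passes_some_iff_all_general hX.hasIndepStatIncrements
    (hX.cadlag.mono fun _ hω ↦ hω.1)
end

section
/- Let X be a real-valued Lévy process on a filtered probability space satisfying the usual conditions. If 0 is regular for (0,∞), i.e. P(T̂_0 = 0) = 1, then for each x ∈ ℝ one has T_x = T̂_x P-almost surely. -/
open MeasureTheory ProbabilityTheory Filter Set
open scoped ENNReal Topology

open scoped NNReal Finset

/-!
Suppose the path reaches `x` before time `r` but never exceeds `x` before time `q > r`. For each
`ε > 0`, it exceeds `x - ε` at some rational time before `r`, and from then on it gains at most `ε`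
during a period of length `q - r`. By the Markov property at the first such time within a finite
set of rationals, this has probability at most that of `X` staying below `ε` on `[0, q - r)`. The
bound tends to `0` with `ε`, since `0` is regular. Approaching the level `x` from below avoids the
measurability of `T_x`.
-/

section Independence

variable {Ω : Type*} {m0 : MeasurableSpace Ω} {P : Measure Ω}

lemma iIndepFun_of_indep_of_measurable_of_lt [IsProbabilityMeasure P] {ι : Type*} [LinearOrder ι]
    {β : ι → Type*} [mβ : ∀ i, MeasurableSpace (β i)] {f : ∀ i, Ω → β i}
    {𝒢 : ι → MeasurableSpace Ω} (hf : ∀ i j, i < j → Measurable[𝒢 j] (f i))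
    (hind : ∀ i, Indep ((mβ i).comap (f i)) (𝒢 i) P) : iIndepFun f P := by
  rw [iIndepFun_iff_measure_inter_preimage_eq_mul]
  intro S B hB
  induction S using Finset.induction_on_max with
  | empty => simp
  | insert j S hlt ih =>
    have hpast : MeasurableSet[𝒢 j] (⋂ i ∈ S, f i ⁻¹' B i) :=
      Finset.measurableSet_biInter S fun i hi ↦
        hf i j (hlt i hi) (hB i (Finset.mem_insert_of_mem hi))
    have hnow : MeasurableSet[(mβ j).comap (f j)] (f j ⁻¹' B j) :=
      ⟨B j, hB j (Finset.mem_insert_self j S), rfl⟩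
    rw [Finset.set_biInter_insert, (Indep_iff _ _ P).1 (hind j) _ _ hnow hpast,
      ih fun i hi ↦ hB i (Finset.mem_insert_of_mem hi),
      Finset.prod_insert fun hj ↦ (hlt j hj).false]

variable [IsFiniteMeasure P] {m₁ m₂ : MeasurableSpace Ω} {A B : Set Ω}

lemma cond_apply_eq_of_indep (hind : Indep m₁ m₂ P) (hm₂ : m₂ ≤ m0) (hA : MeasurableSet[m₂] A)
    (hPA : P A ≠ 0) (hB : MeasurableSet[m₁] B) : P[B | A] = P B := by
  rw [cond_apply (hm₂ _ hA), inter_comm, (Indep_iff _ _ P).1 hind B A hB hA, mul_comm (P B),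
    ← mul_assoc, ENNReal.inv_mul_cancel hPA (measure_ne_top P A), one_mul]

lemma indep_cond_of_indep (hind : Indep m₁ m₂ P) (hm₂ : m₂ ≤ m0) (hA : MeasurableSet[m₂] A)
    (hPA : P A ≠ 0) : Indep m₁ m₂ P[|A] := by
  rw [Indep_iff]
  intro B C hB hC
  rw [cond_apply_eq_of_indep hind hm₂ hA hPA hB, cond_apply (hm₂ _ hA), cond_apply (hm₂ _ hA),
    inter_left_comm, (Indep_iff _ _ P).1 hind B (A ∩ C) hB (hA.inter hC), mul_left_comm]

end Independence

lemma exists_monotone_nat_seq_of_finset {α : Type*} [LinearOrder α] [OrderBot α] (I : Finset α) :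
    ∃ τ : ℕ → α, Monotone τ ∧ τ 0 = ⊥ ∧ ∀ s ∈ I, ∃ k, τ k = s := by
  obtain ⟨n, hn⟩ : ∃ n, #(insert ⊥ I) = n + 1 :=
    Nat.exists_eq_add_one.2 (Finset.card_pos.2 (Finset.insert_nonempty ⊥ I))
  let e := (insert ⊥ I).orderEmbOfFin hn
  have he (s : α) (hs : s ∈ insert ⊥ I) : ∃ k, e k = s := by
    rwa [← Set.mem_range, Finset.range_orderEmbOfFin]
  refine ⟨fun k ↦ e ⟨min k n, by omega⟩, fun i j hij ↦ ?_, ?_, fun s hs ↦ ?_⟩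
  · exact e.monotone (Fin.mk_le_mk.2 (min_le_min_right n hij))
  · obtain ⟨k, hk⟩ := he ⊥ (Finset.mem_insert_self ⊥ I)
    exact le_bot_iff.1 (hk ▸ e.monotone (Fin.mk_le_of_le_val (by simp)))
  · obtain ⟨k, hk⟩ := he s (Finset.mem_insert_of_mem hs)
    exact ⟨k, by simpa [min_eq_left (Nat.le_of_lt_succ k.2)] using hk⟩

/-- The process of increments of `X` after time `t`, namely `s ↦ X (t + s) - X t` for `s ≥ 0`. -/
def incrementsAfter {Ω V : Type*} [Sub V] (X : ℝ → Ω → V) (t : ℝ) (ω : Ω) (s : ℝ≥0) : V :=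
  X (t + s) ω - X t ω

/-- The process `X` is adapted to `F`, and on `[0, ∞)` its increments are stationary and independent
of the past given by `F`. These are the properties of a Lévy process that do not involve the
regularity of its paths or of the filtration; stationarity at time `0` encodes `X 0 = 0`. -/
structure HasStationaryIndepIncrements {Ω V : Type*} {m0 : MeasurableSpace Ω} [MeasurableSpace V]
    [Sub V] (P : Measure Ω) (F : Filtration ℝ m0) (X : ℝ → Ω → V) : Prop where
  adapted : ∀ t, Measurable[F t] (X t)
  indep : ∀ s t, 0 ≤ s → s ≤ t →
    Indep (MeasurableSpace.comap (fun ω ↦ X t ω - X s ω) inferInstance) (F s) P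
  map_sub : ∀ s t, 0 ≤ s → s ≤ t → P.map (fun ω ↦ X t ω - X s ω) = P.map (X (t - s))

lemma IsLevy.hasStationaryIndepIncrements {Ω : Type*} {m0 : MeasurableSpace Ω} {P : Measure Ω}
    {F : Filtration ℝ m0} {X : ℝ → Ω → ℝ} (hX : IsLevy P F X) :
    HasStationaryIndepIncrements P F X :=
  ⟨hX.adapted, hX.indep, hX.statInc⟩

namespace HasStationaryIndepIncrements

section MarkovProperty

variable {Ω V : Type*} {m0 : MeasurableSpace Ω} [MeasurableSpace V] [AddCommGroup V]
  {P : Measure Ω} {F : Filtration ℝ m0} {X : ℝ → Ω → V} {t : ℝ} {A : Set Ω}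

lemma measurable (hX : HasStationaryIndepIncrements P F X) (t : ℝ) : Measurable (X t) :=
  (hX.adapted t).mono (F.le t) le_rfl

lemma ae_eq_zero [MeasurableSingletonClass V] (hX : HasStationaryIndepIncrements P F X) :
    ∀ᵐ ω ∂P, X 0 ω = 0 := by
  have hlaw : P.map (fun _ ↦ (0 : V)) = P.map (X 0) := by
    simpa using hX.map_sub 0 0 le_rfl le_rfl
  have hzero : ∀ᵐ v ∂P.map (X 0), v = 0 := by
    rw [← hlaw, Measure.map_const]
    exact Measure.ae_smul_measure (by simp) _
  exact ae_of_ae_map (hX.measurable 0).aemeasurable hzero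

variable [MeasurableSub₂ V]

lemma measurable_incrementsAfter (hX : HasStationaryIndepIncrements P F X) (t : ℝ) :
    Measurable (incrementsAfter X t) :=
  measurable_pi_lambda _ fun s ↦ (hX.measurable (t + s)).sub (hX.measurable t)

lemma map_cond_increment [IsFiniteMeasure P] (hX : HasStationaryIndepIncrements P F X)
    (ht : 0 ≤ t) (hA : MeasurableSet[F t] A) (hPA : P A ≠ 0) {s u : ℝ} (hts : t ≤ s) (hsu : s ≤ u) :
    P[|A].map (fun ω ↦ X u ω - X s ω) = P.map (X (u - s)) := by
  have hmeas : Measurable fun ω ↦ X u ω - X s ω := (hX.measurable u).sub (hX.measurable s)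
  rw [← hX.map_sub s u (ht.trans hts) hsu]
  ext B hB
  rw [Measure.map_apply hmeas hB, Measure.map_apply hmeas hB]
  exact cond_apply_eq_of_indep (hX.indep s u (ht.trans hts) hsu) (F.le s) (F.mono hts A hA) hPA
    ⟨B, hB, rfl⟩

variable [IsProbabilityMeasure P]

lemma iIndepFun_cond_increments (hX : HasStationaryIndepIncrements P F X) (ht : 0 ≤ t)
    (hA : MeasurableSet[F t] A) (hPA : P A ≠ 0) {τ : ℕ → ℝ≥0} (hτ : Monotone τ) :
    iIndepFun (fun i ω ↦ X (t + τ (i + 1)) ω - X (t + τ i) ω) P[|A] := by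
  have := cond_isProbabilityMeasure hPA
  have hmono : Monotone fun i ↦ t + τ i := fun i j hij ↦ by simpa using hτ hij
  refine iIndepFun_of_indep_of_measurable_of_lt (𝒢 := fun i ↦ F (t + τ i)) ?_ fun i ↦ ?_
  · intro i j hij
    exact ((hX.adapted _).mono (F.mono (hmono hij)) le_rfl).sub
      ((hX.adapted _).mono (F.mono (hmono hij.le)) le_rfl)
  · have hAi : MeasurableSet[F (t + τ i)] A := F.mono (by simp) A hA
    exact indep_cond_of_indep (hX.indep _ _ (by positivity) (hmono i.le_succ)) (F.le _) hAi hPA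

lemma identDistrib_cond_increments (hX : HasStationaryIndepIncrements P F X) (ht : 0 ≤ t)
    (hA : MeasurableSet[F t] A) (hPA : P A ≠ 0) {τ : ℕ → ℝ≥0} (hτ : Monotone τ) :
    IdentDistrib (fun ω i ↦ X (t + τ (i + 1)) ω - X (t + τ i) ω)
      (fun ω i ↦ X (0 + τ (i + 1)) ω - X (0 + τ i) ω) P[|A] P := by
  have hmeas (u v : ℝ) : Measurable fun ω ↦ X u ω - X v ω :=
    (hX.measurable u).sub (hX.measurable v)
  have hτ_real (i : ℕ) : (τ i : ℝ) ≤ τ (i + 1) := hτ i.le_succ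
  refine IdentDistrib.pi (fun i ↦ ⟨(hmeas _ _).aemeasurable, (hmeas _ _).aemeasurable, ?_⟩)
    (hX.iIndepFun_cond_increments ht hA hPA hτ) ?_
  · rw [hX.map_cond_increment ht hA hPA (by simp) (by gcongr; exact hτ_real i),
      hX.map_sub _ _ (by positivity) (by gcongr; exact hτ_real i),
      add_sub_add_left_eq_sub, add_sub_add_left_eq_sub]
  · simpa only [cond_univ] using hX.iIndepFun_cond_increments le_rfl MeasurableSet.univ
      (by simp) hτ

variable [MeasurableAdd₂ V]

lemma map_cond_incrementsAfter (hX : HasStationaryIndepIncrements P F X) (ht : 0 ≤ t)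
    (hA : MeasurableSet[F t] A) (hPA : P A ≠ 0) :
    P[|A].map (incrementsAfter X t) = P.map (incrementsAfter X 0) := by
  refine IsProjectiveLimit.unique (P := fun I ↦ (P.map (incrementsAfter X 0)).map I.restrict)
    (fun I ↦ ?_) fun I ↦ rfl
  change (P[|A].map _).map _ = (P.map _).map _
  obtain ⟨τ, hτ, hτ0, hτI⟩ := exists_monotone_nat_seq_of_finset I
  choose k hk using fun s : I ↦ hτI s s.2
  let partialSums (v : ℕ → V) (s : I) : V := ∑ j ∈ Finset.range (k s), v j
  have hpartialSums : Measurable partialSums := by fun_prop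
  have hrestrict (u : ℝ) : I.restrict ∘ incrementsAfter X u =
      partialSums ∘ fun ω i ↦ X (u + τ (i + 1)) ω - X (u + τ i) ω := by
    ext ω s
    simp [partialSums, incrementsAfter, Finset.sum_range_sub (fun i ↦ X (u + τ i) ω), hk, hτ0]
  rw [Measure.map_map (by fun_prop) (hX.measurable_incrementsAfter t),
    Measure.map_map (by fun_prop) (hX.measurable_incrementsAfter 0), hrestrict, hrestrict]
  exact ((hX.identDistrib_cond_increments ht hA hPA hτ).comp hpartialSums).map_eq

theorem measure_inter_preimage_incrementsAfter (hX : HasStationaryIndepIncrements P F X)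
    (ht : 0 ≤ t) (hA : MeasurableSet[F t] A) {C : Set (ℝ≥0 → V)} (hC : MeasurableSet C) :
    P (A ∩ incrementsAfter X t ⁻¹' C) = P A * P (incrementsAfter X 0 ⁻¹' C) := by
  by_cases hPA : P A = 0
  · rw [hPA, zero_mul]
    exact measure_mono_null inter_subset_left hPA
  · rw [← cond_mul_eq_inter (F.le t A hA), mul_comm,
      ← Measure.map_apply (hX.measurable_incrementsAfter t) hC,
      hX.map_cond_incrementsAfter ht hA hPA, Measure.map_apply (hX.measurable_incrementsAfter 0) hC]

lemma measure_biUnion_inter_preimage_incrementsAfter_le (hX : HasStationaryIndepIncrements P F X)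
    {I : Finset ℝ} (hI : ∀ t ∈ I, 0 ≤ t) {A : ℝ → Set Ω} (hA : ∀ t ∈ I, MeasurableSet[F t] (A t))
    (hdisj : Pairwise (Function.onFun Disjoint A)) {C : Set (ℝ≥0 → V)} (hC : MeasurableSet C) :
    P (⋃ t ∈ I, A t ∩ incrementsAfter X t ⁻¹' C) ≤ P (incrementsAfter X 0 ⁻¹' C) := by
  have hsum : ∑ t ∈ I, P (A t) ≤ 1 := by
    rw [← measure_univ (μ := P)]
    exact sum_measure_le_measure_univ (fun t ht ↦ (F.le t _ (hA t ht)).nullMeasurableSet)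
      fun _ _ _ _ hst ↦ (hdisj hst).aedisjoint
  calc P (⋃ t ∈ I, A t ∩ incrementsAfter X t ⁻¹' C)
      ≤ ∑ t ∈ I, P (A t ∩ incrementsAfter X t ⁻¹' C) := measure_biUnion_finset_le I _
    _ = (∑ t ∈ I, P (A t)) * P (incrementsAfter X 0 ⁻¹' C) := by
        rw [Finset.sum_mul]
        exact Finset.sum_congr rfl fun t ht ↦
          hX.measure_inter_preimage_incrementsAfter (hI t ht) (hA t ht) hC
    _ ≤ P (incrementsAfter X 0 ⁻¹' C) := mul_le_of_le_one_left' hsum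

end MarkovProperty

end HasStationaryIndepIncrements

section FirstTimeAbove

variable {Ω : Type*} {X : ℝ → Ω → ℝ}

/-- The event that `t` is the first time in the finite set `I` at which `X` exceeds `y`. -/
def firstTimeAbove (X : ℝ → Ω → ℝ) (I : Finset ℝ) (y t : ℝ) : Set Ω :=
  {ω | IsLeast {s | s ∈ I ∧ y < X s ω} t}

lemma exists_mem_firstTimeAbove {I : Finset ℝ} {y : ℝ} {ω : Ω} (h : ∃ t ∈ I, y < X t ω) :
    ∃ t, ω ∈ firstTimeAbove X I y t := by
  have hne : (I.filter (y < X · ω)).Nonempty := Finset.filter_nonempty_iff.2 h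
  have hleast := Finset.isLeast_min' _ hne
  rw [Finset.coe_filter] at hleast
  exact ⟨_, hleast⟩

lemma pairwise_disjoint_firstTimeAbove (X : ℝ → Ω → ℝ) (I : Finset ℝ) (y : ℝ) :
    Pairwise (Function.onFun Disjoint (firstTimeAbove X I y)) := fun _ _ hst ↦
  Set.disjoint_left.2 fun _ hs ht ↦ hst (IsLeast.unique hs ht)

lemma measurableSet_firstTimeAbove {m0 : MeasurableSpace Ω} {F : Filtration ℝ m0}
    (hX : ∀ t, Measurable[F t] (X t)) {I : Finset ℝ} (y : ℝ) {t : ℝ} (ht : t ∈ I) :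
    MeasurableSet[F t] (firstTimeAbove X I y t) := by
  have hnow : MeasurableSet[F t] {ω | y < X t ω} := hX t measurableSet_Ioi
  have hpast : MeasurableSet[F t] (⋂ s ∈ I.filter (· < t), {ω | X s ω ≤ y}) :=
    Finset.measurableSet_biInter _ fun s hs ↦
      F.mono (Finset.mem_filter.1 hs).2.le _ (hX s measurableSet_Iic)
  convert! hnow.inter hpast using 1
  ext ω
  simp only [firstTimeAbove, IsLeast, mem_lowerBounds, mem_ofPred_eq, mem_inter_iff, mem_iInter,
    Finset.mem_filter]
  grind

end FirstTimeAbove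

namespace HasStationaryIndepIncrements

variable {Ω : Type*} {m0 : MeasurableSpace Ω} {P : Measure Ω} [IsProbabilityMeasure P]
  {F : Filtration ℝ m0} {X : ℝ → Ω → ℝ}

lemma measure_inter_exists_mem_finset_lt_le (hX : HasStationaryIndepIncrements P F X)
    {I : Finset ℝ} (hI : ∀ t ∈ I, 0 ≤ t) {y : ℝ} {C : Set (ℝ≥0 → ℝ)} (hC : MeasurableSet C)
    {A : Set Ω} (hA : ∀ ω ∈ A, ∀ t ∈ I, y < X t ω → incrementsAfter X t ω ∈ C) :
    P (A ∩ {ω | ∃ t ∈ I, y < X t ω}) ≤ P (incrementsAfter X 0 ⁻¹' C) := by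
  refine (measure_mono ?_).trans (hX.measure_biUnion_inter_preimage_incrementsAfter_le hI
    (fun t ht ↦ measurableSet_firstTimeAbove hX.adapted y ht)
    (pairwise_disjoint_firstTimeAbove X I y) hC)
  rintro ω ⟨hωA, hω⟩
  obtain ⟨t, ht⟩ := exists_mem_firstTimeAbove hω
  exact mem_biUnion ht.1.1 ⟨ht, hA ω hωA t ht.1.1 ht.1.2⟩

lemma measure_le_of_forall_incrementsAfter_mem (hX : HasStationaryIndepIncrements P F X)
    {D : Set ℝ} (hD : D.Countable) (hD0 : ∀ t ∈ D, 0 ≤ t) {y : ℝ} {C : Set (ℝ≥0 → ℝ)}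
    (hC : MeasurableSet C) {A : Set Ω} (hAy : ∀ ω ∈ A, ∃ t ∈ D, y < X t ω)
    (hAC : ∀ ω ∈ A, ∀ t ∈ D, y < X t ω → incrementsAfter X t ω ∈ C) :
    P A ≤ P (incrementsAfter X 0 ⁻¹' C) := by
  have := hD.to_subtype
  let B (I : Finset D) : Set Ω := A ∩ {ω | ∃ t ∈ I.map (Function.Embedding.subtype _), y < X t ω}
  have hB_mono : Monotone B := fun I J hIJ ↦ inter_subset_inter_right A
    fun ω ⟨t, ht, hyt⟩ ↦ ⟨t, Finset.map_subset_map.2 hIJ ht, hyt⟩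
  have hA_subset : A ⊆ ⋃ I, B I := fun ω hω ↦ by
    obtain ⟨t, ht, hyt⟩ := hAy ω hω
    exact mem_iUnion.2 ⟨{⟨t, ht⟩}, hω, t, by simp, hyt⟩
  calc P A ≤ P (⋃ I, B I) := measure_mono hA_subset
    _ = ⨆ I, P (B I) := hB_mono.measure_iUnion
    _ ≤ P (incrementsAfter X 0 ⁻¹' C) := iSup_le fun I ↦ by
        have hID (t : ℝ) (ht : t ∈ I.map (Function.Embedding.subtype _)) : t ∈ D :=
          Finset.property_of_mem_map_subtype I ht
        exact hX.measure_inter_exists_mem_finset_lt_le (fun t ht ↦ hD0 t (hID t ht)) hC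
          fun ω hω t ht ↦ hAC ω hω t (hID t ht)

end HasStationaryIndepIncrements

section PathsStayingBelow

/-- The paths that are at most `ε` at all rational times before `δ`. Testing only countably many
times makes this a measurable set for the product σ-algebra. -/
def pathsLE (δ ε : ℝ) : Set (ℝ≥0 → ℝ) :=
  {v | ∀ s : ℚ≥0, ((s : ℝ≥0) : ℝ) < δ → v s ≤ ε}

lemma measurableSet_pathsLE (δ ε : ℝ) : MeasurableSet (pathsLE δ ε) := by
  simp only [pathsLE, ofPred_forall]
  exact .iInter fun s ↦ .iInter fun _ ↦ measurableSet_le (measurable_pi_apply _) measurable_const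

lemma pathsLE_mono (δ : ℝ) : Monotone (pathsLE δ) :=
  fun _ _ hε _ hv s hs ↦ (hv s hs).trans hε

lemma biInter_pathsLE (δ ε : ℝ) : ⋂ η > ε, pathsLE δ η = pathsLE δ ε := by
  refine Subset.antisymm (fun v hv s hs ↦ ?_) (subset_iInter₂ fun η hη ↦ pathsLE_mono δ hη.le)
  exact le_of_forall_gt_imp_ge_of_dense fun η hη ↦ mem_iInter₂.1 hv η hη s hs

lemma tendsto_measure_preimage_pathsLE {Ω : Type*} {m0 : MeasurableSpace Ω} {P : Measure Ω}
    [IsFiniteMeasure P] {Y : Ω → ℝ≥0 → ℝ} (hY : Measurable Y) (δ ε : ℝ) :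
    Tendsto (fun η ↦ P (Y ⁻¹' pathsLE δ η)) (𝓝[>] ε) (𝓝 (P (Y ⁻¹' pathsLE δ ε))) := by
  have h := tendsto_measure_biInter_gt (μ := P) (s := fun η ↦ Y ⁻¹' pathsLE δ η) (a := ε)
    (fun η _ ↦ (hY (measurableSet_pathsLE δ η)).nullMeasurableSet)
    (fun _ _ _ hη ↦ preimage_mono (pathsLE_mono δ hη)) ⟨ε + 1, by simp, measure_ne_top P _⟩
  rwa [← preimage_iInter₂, biInter_pathsLE] at h

lemma exists_nnrat_lt_of_continuousWithinAt {f : ℝ → ℝ} {r t y : ℝ} (ht : 0 ≤ t)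
    (hf : ContinuousWithinAt f (Ici t) t) (htr : t < r) (hy : y < f t) :
    ∃ s : ℚ≥0, ((s : ℝ≥0) : ℝ) < r ∧ y < f (s : ℝ≥0) := by
  have hy_near : ∀ᶠ s in 𝓝[>] t, y < f s :=
    (hf.mono Ioi_subset_Ici_self).eventually (lt_mem_nhds hy)
  obtain ⟨u, htu, hu⟩ := (mem_nhdsGT_iff_exists_Ioo_subset' htr).1 hy_near
  obtain ⟨s, hts, hsu⟩ := exists_rat_btwn (lt_min htu htr)
  lift s to ℚ≥0 using by exact_mod_cast ht.trans hts.le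
  exact ⟨s, hsu.trans_le (min_le_right u r), hu ⟨hts, hsu.trans_le (min_le_left u r)⟩⟩

end PathsStayingBelow

section PassageTimes

variable {Ω : Type*} {X : ℝ → Ω → ℝ} {x r : ℝ} {ω : Ω}

lemma sInf_image_ofReal_lt_ofReal_iff {p : ℝ → Prop} :
    sInf (ENNReal.ofReal '' {t | 0 ≤ t ∧ p t}) < ENNReal.ofReal r ↔ ∃ t, 0 ≤ t ∧ t < r ∧ p t := by
  rw [sInf_lt_iff, exists_mem_image]
  refine exists_congr fun t ↦ ?_
  simp only [mem_ofPred_eq, and_assoc]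
  refine and_congr_right fun ht ↦ ?_
  rw [ENNReal.ofReal_lt_ofReal_iff_of_nonneg ht, and_comm]

lemma hitT_lt_ofReal_iff :
    hitT X x ω < ENNReal.ofReal r ↔ ∃ t, 0 ≤ t ∧ t < r ∧ x ≤ X t ω :=
  sInf_image_ofReal_lt_ofReal_iff

lemma hitThat_lt_ofReal_iff :
    hitThat X x ω < ENNReal.ofReal r ↔ ∃ t, 0 ≤ t ∧ t < r ∧ x < X t ω :=
  sInf_image_ofReal_lt_ofReal_iff

lemma hitT_le_hitThat (X : ℝ → Ω → ℝ) (x : ℝ) (ω : Ω) : hitT X x ω ≤ hitThat X x ω :=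
  sInf_le_sInf (image_mono fun _ ht ↦ ⟨ht.1, ht.2.le⟩)

lemma hitThat_le_hitT_of_forall_rat (h : ∀ r q : ℚ, r < q →
      hitT X x ω < ENNReal.ofReal r → hitThat X x ω < ENNReal.ofReal q) :
    hitThat X x ω ≤ hitT X x ω := by
  by_contra! hlt
  obtain ⟨q, -, hTq, hqT⟩ := ENNReal.lt_iff_exists_rat_btwn.1 hlt
  obtain ⟨r, -, hTr, hrq⟩ := ENNReal.lt_iff_exists_rat_btwn.1 hTq
  have hrq' : r < q := by
    exact_mod_cast (Real.toNNReal_lt_toNNReal_iff').1 (ENNReal.coe_lt_coe.1 hrq) |>.1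
  exact (h r q hrq' hTr).not_gt hqT

end PassageTimes

namespace HasStationaryIndepIncrements

variable {Ω : Type*} {m0 : MeasurableSpace Ω} {P : Measure Ω} [IsProbabilityMeasure P]
  {F : Filtration ℝ m0} {X : ℝ → Ω → ℝ}

lemma measure_incrementsAfter_preimage_pathsLE_zero (hX : HasStationaryIndepIncrements P F X)
    (hrc : ∀ᵐ ω ∂P, ∀ t, 0 ≤ t → ContinuousWithinAt (X · ω) (Ici t) t)
    (hreg : P {ω | hitThat X 0 ω = 0} = 1) {δ : ℝ} (hδ : 0 < δ) :
    P (incrementsAfter X 0 ⁻¹' pathsLE δ 0) = 0 := by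
  have hmeas := hX.measurable_incrementsAfter 0 (measurableSet_pathsLE δ 0)
  have hae : {ω | hitThat X 0 ω = 0} ≤ᵐ[P] (incrementsAfter X 0 ⁻¹' pathsLE δ 0)ᶜ := by
    filter_upwards [hrc, hX.ae_eq_zero] with ω hcont hstart (hhit : hitThat X 0 ω = 0) hω
    obtain ⟨t, ht, htδ, hpos⟩ : ∃ t, 0 ≤ t ∧ t < δ ∧ 0 < X t ω :=
      hitThat_lt_ofReal_iff.1 (by simpa [hhit] using hδ)
    obtain ⟨s, hsδ, hs⟩ := exists_nnrat_lt_of_continuousWithinAt ht (hcont t ht) htδ hpos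
    have hs_le : X (s : ℝ≥0) ω ≤ 0 := by simpa [incrementsAfter, hstart] using hω s hsδ
    exact hs_le.not_gt hs
  rw [← prob_compl_eq_one_iff hmeas]
  exact le_antisymm prob_le_one (hreg ▸ measure_mono_ae hae)

lemma ae_hitThat_lt_of_hitT_lt (hX : HasStationaryIndepIncrements P F X)
    (hrc : ∀ᵐ ω ∂P, ∀ t, 0 ≤ t → ContinuousWithinAt (X · ω) (Ici t) t)
    (hreg : P {ω | hitThat X 0 ω = 0} = 1) (x : ℝ) {r q : ℝ} (hrq : r < q) :
    ∀ᵐ ω ∂P, hitT X x ω < ENNReal.ofReal r → hitThat X x ω < ENNReal.ofReal q := by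
  let A := {ω | (∀ t, 0 ≤ t → ContinuousWithinAt (X · ω) (Ici t) t) ∧
    hitT X x ω < ENNReal.ofReal r ∧ ¬ hitThat X x ω < ENNReal.ofReal q}
  suffices hA : P A = 0 by
    filter_upwards [hrc, measure_eq_zero_iff_ae_notMem.1 hA] with ω hcont hω hr
    by_contra hq
    exact hω ⟨hcont, hr, hq⟩
  have hlim : Tendsto (fun ε ↦ P (incrementsAfter X 0 ⁻¹' pathsLE (q - r) ε)) (𝓝[>] 0) (𝓝 0) :=
    hX.measure_incrementsAfter_preimage_pathsLE_zero hrc hreg (sub_pos.2 hrq) ▸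
      tendsto_measure_preimage_pathsLE (hX.measurable_incrementsAfter 0) (q - r) 0
  refine nonpos_iff_eq_zero.1 (ge_of_tendsto hlim ?_)
  filter_upwards [self_mem_nhdsWithin] with ε (hε : 0 < ε)
  let D : Set ℝ := (fun s : ℚ≥0 ↦ ((s : ℝ≥0) : ℝ)) '' {s | ((s : ℝ≥0) : ℝ) < r}
  have hD0 : ∀ t ∈ D, 0 ≤ t := by
    rintro _ ⟨s, -, rfl⟩
    positivity
  refine hX.measure_le_of_forall_incrementsAfter_mem (y := x - ε) (D := D)
    ((to_countable _).image _) hD0 (measurableSet_pathsLE _ _) ?_ ?_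
  · rintro ω ⟨hcont, hr, -⟩
    obtain ⟨t, ht, htr, hxt⟩ := hitT_lt_ofReal_iff.1 hr
    obtain ⟨s, hsr, hs⟩ := exists_nnrat_lt_of_continuousWithinAt ht (hcont t ht) htr
      (show x - ε < X t ω by linarith)
    exact ⟨_, ⟨s, hsr, rfl⟩, hs⟩
  · rintro ω ⟨-, -, hq⟩ _ ⟨t, htr : ((t : ℝ≥0) : ℝ) < r, rfl⟩ hyt s hs
    have hle : X ((t : ℝ≥0) + (s : ℝ≥0)) ω ≤ x := by
      by_contra! hlt
      exact hq (hitThat_lt_ofReal_iff.2 ⟨_, by positivity, by linarith, hlt⟩)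
    simp only [incrementsAfter]
    linarith

end HasStationaryIndepIncrements

theorem hitT_eq_hitThat_of_regular_general {Ω : Type*} {m0 : MeasurableSpace Ω}
    {P : Measure Ω} [IsProbabilityMeasure P] {F : Filtration ℝ m0} {X : ℝ → Ω → ℝ}
    (hX : HasStationaryIndepIncrements P F X)
    (hrc : ∀ᵐ ω ∂P, ∀ t, 0 ≤ t → ContinuousWithinAt (X · ω) (Ici t) t)
    (hreg : P {ω | hitThat X 0 ω = 0} = 1) (x : ℝ) :
    ∀ᵐ ω ∂P, hitT X x ω = hitThat X x ω := by
  have hall : ∀ᵐ ω ∂P, ∀ r q : ℚ, r < q →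
      hitT X x ω < ENNReal.ofReal r → hitThat X x ω < ENNReal.ofReal q :=
    ae_all_iff.2 fun r ↦ ae_all_iff.2 fun q ↦ eventually_imp_distrib_left.2 fun hrq ↦
      hX.ae_hitThat_lt_of_hitT_lt hrc hreg x (by exact_mod_cast hrq)
  filter_upwards [hall] with ω hω
  exact le_antisymm (hitT_le_hitThat X x ω) (hitThat_le_hitT_of_forall_rat hω)

/-- If `0` is regular for `(0,∞)`, i.e. `P(T̂_0 = 0) = 1`, then for each `x ∈ ℝ`,
`T_x = T̂_x` `P`-a.s. -/
theorem hitT_eq_hitThat_of_regular {Ω : Type*} {m0 : MeasurableSpace Ω}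
    (P : Measure Ω) (F : MeasureTheory.Filtration ℝ m0) (X : ℝ → Ω → ℝ)
    (hX : IsLevy P F X)
    (hreg : P {ω | hitThat X 0 ω = 0} = 1) :
    ∀ x : ℝ, ∀ᵐ ω ∂P, hitT X x ω = hitThat X x ω := by
  have := hX.isProb
  exact hitT_eq_hitThat_of_regular_general hX.hasStationaryIndepIncrements
    (hX.cadlag.mono fun _ h ↦ h.1) hreg
end

section
/- Let (Ω, 𝓕, P) be a complete probability space, 𝒢 ⊆ 𝓕 a sub-σ-algebra, and let Y : (Ω,𝓕) → (S,𝒮) and Z : (Ω,𝓕) → (T,𝒯) be random elements into measurable spaces such that σ(Y) ⊆ 𝒢 and σ(Z) is independent of 𝒢 under P. Let f : S × T → ℝ be bounded and measurable with respect to the completion of 𝒮⊗𝒯 relative to the law P_{(Y,Z)} of (Y,Z). Then: (i) (Y,Z) is measurable from (Ω,𝓕) to (S×T, completion of 𝒮⊗𝒯 under P_{(Y,Z)}); (ii) for P_Y-almost every y ∈ S, the map ω ↦ f(y, Z(ω)) is 𝓕-measurable; (iii) the map y ↦ E[f(y, Z)] (defined to be 0 on the P_Y-null set where ω ↦ f(y,Z(ω))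 fails to be 𝓕-measurable) is measurable with respect to the completion of 𝒮 under P_Y; and P-almost surely, E[f(Y, Z) | 𝒢] = (y ↦ E[f(y, Z)]) ∘ Y. -/
open MeasureTheory ProbabilityTheory Filter Set
open scoped ENNReal Topology

/-!
Independence says that the pairing `ω ↦ (Y ω, Z ω)` has the same law as its decoupled version
`(ω, ω') ↦ (Y ω, Z ω')` under a product measure, and this remains true when the first factor is
restricted to an event of `G`. Fubini's theorem on the product then turns `∫_A f(Y, Z)` into
`∫_A E[f(y, Z)]|_{y = Y}`, which is the defining property of the conditional expectation, and it
yields the measurability of almost every slice and of the averaged function. Completeness of `P`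
upgrades null measurability on `Ω` to measurability.
-/

section Decoupling

variable {Ω S T E : Type*} {G mΩ : MeasurableSpace Ω} {mS : MeasurableSpace S}
  {mT : MeasurableSpace T} {P : Measure Ω} {Y : Ω → S} {Z : Ω → T} {f : S × T → E} {A : Set Ω}

theorem map_restrict_prodMk_eq_prod_of_indep [IsFiniteMeasure P] (hG : G ≤ mΩ)
    (hY : Measurable[G] Y) (hZ : Measurable Z) (hZG : Indep (mT.comap Z) G P)
    (hA : MeasurableSet[G] A) :
    (P.restrict A).map (fun ω ↦ (Y ω, Z ω)) = ((P.restrict A).map Y).prod (P.map Z) := by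
  have hY' : Measurable Y := hY.mono hG le_rfl
  refine (Measure.prod_eq fun B D hB hD ↦ ?_).symm
  rw [Measure.map_apply (hY'.prodMk hZ) (hB.prod hD), Measure.map_apply hY' hB,
    Measure.map_apply hZ hD, Measure.restrict_apply (hY'.prodMk hZ (hB.prod hD)),
    Measure.restrict_apply (hY' hB)]
  calc P ((fun ω ↦ (Y ω, Z ω)) ⁻¹' B ×ˢ D ∩ A)
      = P (Z ⁻¹' D ∩ (Y ⁻¹' B ∩ A)) := by
        rw [mk_preimage_prod, inter_comm (Y ⁻¹' B), inter_assoc]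
    _ = P (Z ⁻¹' D) * P (Y ⁻¹' B ∩ A) :=
        (Indep_iff _ _ P).1 hZG _ _ ⟨D, hD, rfl⟩ ((hY hB).inter hA)
    _ = P (Y ⁻¹' B ∩ A) * P (Z ⁻¹' D) := mul_comm _ _

theorem measurePreserving_prodMap_restrict_of_indep [IsFiniteMeasure P] (hG : G ≤ mΩ)
    (hY : Measurable[G] Y) (hZ : Measurable Z) (hZG : Indep (mT.comap Z) G P)
    (hA : MeasurableSet[G] A) :
    MeasurePreserving (Prod.map Y Z) ((P.restrict A).prod P)
      ((P.restrict A).map fun ω ↦ (Y ω, Z ω)) := by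
  rw [map_restrict_prodMk_eq_prod_of_indep hG hY hZ hZG hA]
  exact ((hY.mono hG le_rfl).measurePreserving _).prod (hZ.measurePreserving P)

theorem measurePreserving_prodMap_id_of_indepFun [IsFiniteMeasure P] (hY : AEMeasurable Y P)
    (hZ : Measurable Z) (hYZ : IndepFun Y Z P) :
    MeasurePreserving (Prod.map id Z) ((P.map Y).prod P) (P.map fun ω ↦ (Y ω, Z ω)) := by
  rw [hYZ.map_prod_eq_prod_map_map hY hZ.aemeasurable]
  exact (MeasurePreserving.id _).prod (hZ.measurePreserving P)

theorem ae_aestronglyMeasurable_slice_of_indepFun [TopologicalSpace E] [IsFiniteMeasure P]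
    (hY : AEMeasurable Y P) (hZ : Measurable Z) (hYZ : IndepFun Y Z P)
    (hf : AEStronglyMeasurable f (P.map fun ω ↦ (Y ω, Z ω))) :
    ∀ᵐ y ∂P.map Y, AEStronglyMeasurable (fun ω ↦ f (y, Z ω)) P :=
  (hf.comp_measurePreserving (measurePreserving_prodMap_id_of_indepFun hY hZ hYZ)).prodMk_left

variable [NormedAddCommGroup E] [NormedSpace ℝ E]

theorem aestronglyMeasurable_integral_slice_of_indepFun [IsFiniteMeasure P]
    (hY : AEMeasurable Y P) (hZ : Measurable Z) (hYZ : IndepFun Y Z P)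
    (hf : AEStronglyMeasurable f (P.map fun ω ↦ (Y ω, Z ω))) :
    AEStronglyMeasurable (fun y ↦ ∫ ω, f (y, Z ω) ∂P) (P.map Y) :=
  (hf.comp_measurePreserving
    (measurePreserving_prodMap_id_of_indepFun hY hZ hYZ)).integral_prod_right'

theorem setIntegral_integral_slice_of_indep [IsFiniteMeasure P] (hG : G ≤ mΩ)
    (hY : Measurable[G] Y) (hZ : Measurable Z) (hZG : Indep (mT.comap Z) G P)
    (hf : Integrable f (P.map fun ω ↦ (Y ω, Z ω))) (hA : MeasurableSet[G] A) :
    ∫ ω in A, ∫ ω', f (Y ω, Z ω') ∂P ∂P = ∫ ω in A, f (Y ω, Z ω) ∂P := by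
  have hYZ : Measurable fun ω ↦ (Y ω, Z ω) := (hY.mono hG le_rfl).prodMk hZ
  have hfA : Integrable f ((P.restrict A).map fun ω ↦ (Y ω, Z ω)) :=
    hf.mono_measure (Measure.map_mono Measure.restrict_le_self hYZ)
  have hdec := measurePreserving_prodMap_restrict_of_indep hG hY hZ hZG hA
  calc ∫ ω in A, ∫ ω', f (Y ω, Z ω') ∂P ∂P
      = ∫ p, f (Prod.map Y Z p) ∂(P.restrict A).prod P :=
        (integral_prod _ (hdec.integrable_comp_of_integrable hfA)).symm
    _ = ∫ q, f q ∂(P.restrict A).map fun ω ↦ (Y ω, Z ω) := by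
        rw [← hdec.map_eq, integral_map hdec.aemeasurable
          (hdec.map_eq.symm ▸ hfA.aestronglyMeasurable)]
    _ = ∫ ω in A, f (Y ω, Z ω) ∂P :=
        integral_map hYZ.aemeasurable hfA.aestronglyMeasurable

theorem condExp_comp_prodMk_ae_eq_integral_of_indep [CompleteSpace E] [IsFiniteMeasure P]
    (hG : G ≤ mΩ) (hY : Measurable[G] Y) (hZ : Measurable Z) (hZG : Indep (mT.comap Z) G P)
    (hf : Integrable f (P.map fun ω ↦ (Y ω, Z ω))) :
    P[fun ω ↦ f (Y ω, Z ω)|G] =ᵐ[P] fun ω ↦ ∫ ω', f (Y ω, Z ω') ∂P := by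
  have hY' : Measurable Y := hY.mono hG le_rfl
  have hYZ : IndepFun Y Z P := (indep_of_indep_of_le_right hZG hY.comap_le).symm
  have hslice : Integrable (fun ω ↦ ∫ ω', f (Y ω, Z ω') ∂P) P :=
    ((measurePreserving_prodMap_id_of_indepFun hY'.aemeasurable hZ
      hYZ).integrable_comp_of_integrable hf).integral_prod_left.comp_measurable hY'
  refine (ae_eq_condExp_of_forall_setIntegral_eq hG (hf.comp_measurable (hY'.prodMk hZ))
    (fun _ _ _ ↦ hslice.integrableOn)
    (fun A hA _ ↦ setIntegral_integral_slice_of_indep hG hY hZ hZG hf hA) ?_).symm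
  exact ((aestronglyMeasurable_integral_slice_of_indepFun hY'.aemeasurable hZ hYZ
    hf.aestronglyMeasurable).comp_ae_measurable' hY'.aemeasurable).mono hY.comap_le

theorem condexp_indep_eval_completion_general [CompleteSpace E] [MeasurableSpace E] [BorelSpace E]
    [IsFiniteMeasure P] [P.IsComplete] (hG : G ≤ mΩ) (hY : Measurable[G] Y) (hZ : Measurable Z)
    (hZG : Indep (mT.comap Z) G P) (hf : Integrable f (P.map fun ω ↦ (Y ω, Z ω))) :
    (∀ B : Set (S × T), NullMeasurableSet B (P.map fun ω ↦ (Y ω, Z ω)) →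
        MeasurableSet ((fun ω ↦ (Y ω, Z ω)) ⁻¹' B)) ∧
    (∀ᵐ y ∂P.map Y, Measurable fun ω ↦ f (y, Z ω)) ∧
    NullMeasurable (fun y ↦ ∫ ω, f (y, Z ω) ∂P) (P.map Y) ∧
    P[fun ω ↦ f (Y ω, Z ω)|G] =ᵐ[P] fun ω ↦ ∫ ω', f (Y ω, Z ω') ∂P := by
  have hY' : Measurable Y := hY.mono hG le_rfl
  have hYZ : IndepFun Y Z P := (indep_of_indep_of_le_right hZG hY.comap_le).symm
  refine ⟨fun B hB ↦ ?_, ?_, ?_, condExp_comp_prodMk_ae_eq_integral_of_indep hG hY hZ hZG hf⟩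
  · exact (hB.preimage
      ((hY'.prodMk hZ).measurePreserving P).quasiMeasurePreserving).measurable_of_complete
  · filter_upwards [ae_aestronglyMeasurable_slice_of_indepFun hY'.aemeasurable hZ hYZ
      hf.aestronglyMeasurable] with y hy
    exact hy.aemeasurable.nullMeasurable.measurable_of_complete
  · exact (aestronglyMeasurable_integral_slice_of_indepFun hY'.aemeasurable hZ hYZ
      hf.aestronglyMeasurable).aemeasurable.nullMeasurable

end Decoupling

/-- Lemma on conditioning with completions: on a complete probability space, if
`σ(Y) ⊆ 𝒢`, `σ(Z) ⟂ 𝒢` and `f` is bounded and measurable w.r.t. the completion of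
`𝒮 ⊗ 𝒯` under the law of `(Y,Z)`, then (i) `(Y,Z)` is measurable into that completion,
(ii) for `P_Y`-a.e. `y`, `ω ↦ f(y,Z(ω))` is measurable, (iii) `y ↦ E[f(y,Z)]` is
measurable w.r.t. the `P_Y`-completion, and `E[f(Y,Z) | 𝒢] = (y ↦ E[f(y,Z)]) ∘ Y` a.s.
(the value of `E[f(y,Z)]` on the `P_Y`-null set where measurability fails being an
irrelevant junk value). -/
theorem condexp_indep_eval_completion {Ω S T : Type*} {mΩ : MeasurableSpace Ω}
    {mS : MeasurableSpace S} {mT : MeasurableSpace T}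
    (P : Measure Ω) [IsProbabilityMeasure P] (hPc : P.IsComplete)
    (G : MeasurableSpace Ω) (hG : G ≤ mΩ)
    (Y : Ω → S) (Z : Ω → T)
    (hYm : Measurable[mΩ] Y) (hZm : Measurable[mΩ] Z)
    (hYG : MeasurableSpace.comap Y mS ≤ G)
    (hZG : ProbabilityTheory.Indep (MeasurableSpace.comap Z mT) G P)
    (f : S × T → ℝ) (C : ℝ) (hbdd : ∀ p : S × T, |f p| ≤ C)
    (hf : NullMeasurable f (@Measure.map Ω (S × T) mΩ _ (fun ω => (Y ω, Z ω)) P)) :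
    (∀ B : Set (S × T),
        NullMeasurableSet B (@Measure.map Ω (S × T) mΩ _ (fun ω => (Y ω, Z ω)) P) →
        MeasurableSet[mΩ] ((fun ω => (Y ω, Z ω)) ⁻¹' B)) ∧
    (∀ᵐ y ∂(@Measure.map Ω S mΩ mS Y P), Measurable[mΩ] fun ω => f (y, Z ω)) ∧
    NullMeasurable (fun y : S => ∫ ω, f (y, Z ω) ∂P) (@Measure.map Ω S mΩ mS Y P) ∧
    P[fun ω => f (Y ω, Z ω)|G] =ᵐ[P] fun ω => ∫ ω', f (Y ω, Z ω') ∂P := by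
  exact condexp_indep_eval_completion_general hG (measurable_iff_comap_le.2 hYG) hZm hZG
    (.of_bound hf.aemeasurable.aestronglyMeasurable C (ae_of_all _ hbdd))
end
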